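/- Let α ∈ (1,2), let f, g ∈ L^α(S, μ) be nonzero and satisfy Assumptions (A1) and (A2) with constants ε₁, ε₂, and let ξ, η be jointly SαS with spectral pair (f, g). Let b ≥ 1, β ∈ (0, α/2), let K satisfy Assumptions (K1) and (K2) with exponent β and threshold x₀ = b, set K_b(x) := K(x)·1_{{|x|>b}}, and let L ∈ L¹(ℝ, dx). Then |Cov(K_b(ξ), L(η))| ≤ C b^{β−1} log(b+1) ‖L‖_{L¹} ([g,f]₁* + [f,g]₂), where the constant C depends only on ε₁, ε₂, α, β, ‖f‖_α, ‖g‖_α and the constant in (K1). (Paper's Theorem 2.3.) -/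

import Mathlib

open MeasureTheory Real Set Filter
open scoped ENNReal Topology

noncomputable def nrm (α : ℝ) {S : Type*} [MeasurableSpace S] (μ : Measure S) (f : S → ℝ) : ℝ :=
  (∫ s, |f s| ^ α ∂μ) ^ (1 / α)

noncomputable def dep2 (α : ℝ) {S : Type*} [MeasurableSpace S] (μ : Measure S) (f g : S → ℝ) : ℝ :=
  ∫ s, |f s * g s| ^ (α / 2) ∂μ

noncomputable def dep1s (α : ℝ) {S : Type*} [MeasurableSpace S] (μ : Measure S) (f g : S → ℝ) : ℝ :=
  ∫ s, |f s| ^ (α - 1) * |g s| ∂μ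

noncomputable def dep1 (α : ℝ) {S : Type*} [MeasurableSpace S] (μ : Measure S) (f g : S → ℝ) : ℝ :=
  dep1s α μ f g + dep1s α μ g f

/-- `f ∈ L^α(S, μ)`. -/
def MemLalpha (α : ℝ) {S : Type*} [MeasurableSpace S] (μ : Measure S) (f : S → ℝ) : Prop :=
  AEStronglyMeasurable f μ ∧ Integrable (fun s => |f s| ^ α) μ

/-- Assumption (A1) with constant ε₁. -/
def A1 (α ε₁ : ℝ) {S : Type*} [MeasurableSpace S] (μ : Measure S) (f g : S → ℝ) : Prop :=
  nrm α μ f ^ (α / 2) * nrm α μ g ^ (α / 2) - dep2 α μ f g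
    ≥ ε₁ * (nrm α μ f ^ (α / 2) * nrm α μ g ^ (α / 2))

/-- Assumption (A2) with constant ε₂. -/
def A2 (α ε₂ : ℝ) {S : Type*} [MeasurableSpace S] (μ : Measure S) (f g : S → ℝ) : Prop :=
  ∀ u v : ℝ, nrm α μ (fun s => u * f s + v * g s) ^ α
    ≥ ε₂ * (|u| ^ α * nrm α μ f ^ α + |v| ^ α * nrm α μ g ^ α)

noncomputable def Ufun (α : ℝ) {S : Type*} [MeasurableSpace S] (μ : Measure S)
    (f g : S → ℝ) (u v : ℝ) : ℝ :=
  Real.exp (-(nrm α μ (fun s => u * f s + v * g s) ^ α)) -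
    Real.exp (-(nrm α μ (fun s => u * f s) ^ α) - nrm α μ (fun s => v * g s) ^ α)

/-- signed power `a^⟨p⟩ = sign(a)|a|^p`. -/
noncomputable def spow (a p : ℝ) : ℝ := Real.sign a * |a| ^ p

noncomputable def D1 (α : ℝ) {S : Type*} [MeasurableSpace S] (μ : Measure S)
    (f g : S → ℝ) (u v : ℝ) : ℝ :=
  -α * (∫ s, spow (u * f s + v * g s) (α - 1) * f s ∂μ) *
      Real.exp (-(nrm α μ (fun s => u * f s + v * g s) ^ α)) +
    α * (∫ s, spow (u * f s) (α - 1) * f s ∂μ) *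
      Real.exp (-(nrm α μ (fun s => u * f s) ^ α) - nrm α μ (fun s => v * g s) ^ α)

noncomputable def D2 (α : ℝ) {S : Type*} [MeasurableSpace S] (μ : Measure S)
    (f g : S → ℝ) (u v : ℝ) : ℝ :=
  -(α * (α - 1)) * (∫ s, (if f s = 0 ∨ g s = 0 then (0:ℝ) else
        |u * f s + v * g s| ^ (α - 2) * (f s * g s)) ∂μ) *
      Real.exp (-(nrm α μ (fun s => u * f s + v * g s) ^ α)) +
    α ^ 2 * (∫ s, spow (u * f s + v * g s) (α - 1) * f s ∂μ) *
      (∫ s, spow (u * f s + v * g s) (α - 1) * g s ∂μ) *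
      Real.exp (-(nrm α μ (fun s => u * f s + v * g s) ^ α)) -
    α ^ 2 * (∫ s, spow (u * f s) (α - 1) * f s ∂μ) *
      (∫ s, spow (v * g s) (α - 1) * g s ∂μ) *
      Real.exp (-(nrm α μ (fun s => u * f s) ^ α) - nrm α μ (fun s => v * g s) ^ α)

/-- `(ξ, η)` is jointly SαS with spectral pair `(f, g)`. -/
def JointSAS (α : ℝ) {S : Type*} [MeasurableSpace S] (μ : Measure S) (f g : S → ℝ)
    {Ω : Type*} [MeasurableSpace Ω] (P : Measure Ω) (ξ η : Ω → ℝ) : Prop :=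
  ∀ u v : ℝ, (∫ ω, Complex.exp (Complex.I * ((u * ξ ω + v * η ω : ℝ) : ℂ)) ∂P)
    = Complex.exp (-((nrm α μ (fun s => u * f s + v * g s) ^ α : ℝ) : ℂ))

/-!
By the Fourier inversion theorem, the covariance of `ξ M(ξ)` with `L(η)` is the integral of
`𝓕 M(u) 𝓕 L(v)` against the covariance of `ξ e^{2πiuξ}` with `e^{2πivη}`. The latter is a
derivative of the difference between the joint characteristic function and the product of the
marginal ones, and by (A2) it is at most a multiple of
`([g,f]₁* + [f,g]₂) (1 + u²)⁻¹ (1 + v²)⁻¹`. Bounding `𝓕 L` by `‖L‖_{L¹}`, only the integral of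
`|𝓕 M(u)| (1 + u²)⁻¹` remains.

This is applied to the two halves `M` of `K(x)/x` cut off at `b`. Being decreasing, such an `M`
satisfies `|𝓕 M(u)| ≤ ∫_{(b, b + 1/(2|u|)]} M`: translating by half a period writes `2 𝓕 M(u)` as
the Fourier transform of `M - M(· + 1/(2u))`, whose `L¹` norm telescopes. With
`M(x) ≤ c x^{β-1}` this is at most `c min(b^{β-1}/|u|, |u|^{-β}/β)`, and the ranges `|u| ≤ 1/b`,
`1/b < |u| ≤ 1` and `1 < |u|` contribute `b^{β-1}`, `b^{β-1} log b` and `b^{β-1}` up to constants.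
-/

open scoped FourierTransform SchwartzMap

section FourierStieltjes

variable {V : Type*} [NormedAddCommGroup V] [InnerProductSpace ℝ V] [MeasurableSpace V]
  [BorelSpace V] {Ω : Type*} [MeasurableSpace Ω] {P : Measure Ω} {W : Ω → ℂ} {X : Ω → V}

/-- The Fourier–Stieltjes transform of the image under `X` of the complex measure `W • P`. Like
Mathlib's Fourier integral it uses the character `𝐞 t = exp (2πit)`, but with a positive sign, so
that for `W = 1` it is the characteristic function of `X` up to a dilation by `2π`. -/
noncomputable def weightedFourier (P : Measure Ω) (W : Ω → ℂ) (X : Ω → V) (v : V) : ℂ :=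
  ∫ ω, W ω * 𝐞 (inner ℝ (X ω) v) ∂P

lemma continuous_weightedFourier [SecondCountableTopology V] (hW : Integrable W P)
    (hX : Measurable X) : Continuous (weightedFourier P W X) := by
  refine continuous_of_dominated (bound := fun ω => ‖W ω‖) (fun v => ?_) (fun v => ?_) hW.norm ?_
  · exact hW.1.mul (by fun_prop : Measurable _).aestronglyMeasurable
  · simp [Circle.norm_coe]
  · exact .of_forall fun ω => by fun_prop

variable [FiniteDimensional ℝ V] [SFinite P]

lemma integral_mul_fourierInv_comp (hW : Integrable W P) (hX : Measurable X) {G : V → ℂ}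
    (hG : Integrable G) :
    ∫ ω, W ω * 𝓕⁻ G (X ω) ∂P = ∫ v, weightedFourier P W X v * G v := by
  have hprod : Integrable (fun p : Ω × V => 𝐞 (inner ℝ p.2 (X p.1)) * (W p.1 * G p.2))
      (P.prod volume) :=
    (hW.mul_prod hG).bdd_mul (c := 1)
      (by fun_prop : Measurable _).aestronglyMeasurable (.of_forall fun _ => (Circle.norm_coe _).le)
  calc ∫ ω, W ω * 𝓕⁻ G (X ω) ∂P
      = ∫ ω, (∫ v, 𝐞 (inner ℝ v (X ω)) * (W ω * G v)) ∂P := by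
        simp only [Real.fourierInv_eq, ← integral_const_mul, Circle.smul_def, smul_eq_mul,
          mul_left_comm]
    _ = ∫ v, ∫ ω, 𝐞 (inner ℝ v (X ω)) * (W ω * G v) ∂P := integral_integral_swap hprod
    _ = ∫ v, weightedFourier P W X v * G v := by
        simp only [weightedFourier, ← integral_mul_const, real_inner_comm, mul_left_comm, mul_assoc]

lemma integral_mul_schwartz_comp (hW : Integrable W P) (hX : Measurable X) (ψ : 𝓢(V, ℂ)) :
    ∫ ω, W ω * ψ (X ω) ∂P = ∫ v, weightedFourier P W X v * 𝓕 (ψ : V → ℂ) v := by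
  have hF : Integrable (𝓕 (ψ : V → ℂ)) := by
    rw [← SchwartzMap.fourier_coe]
    exact (𝓕 ψ).integrable
  rw [← integral_mul_fourierInv_comp hW hX hF, ψ.continuous.fourierInv_fourier_eq ψ.integrable hF]

omit [SFinite P] in
lemma exists_schwartz_integral_norm_sub_le {ν : Measure V} [IsFiniteMeasureOnCompacts ν]
    {L : V → ℂ} (hL : Integrable L ν) {ε : ℝ} (hε : 0 < ε) :
    ∃ ψ : 𝓢(V, ℂ), Integrable ψ ν ∧ ∫ x, ‖L x - ψ x‖ ∂ν ≤ ε := by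
  obtain ⟨g, hg_supp, hg_smooth, hg⟩ :=
    (memLp_one_iff_integrable.2 hL).exist_eLpNorm_sub_le ENNReal.one_ne_top le_rfl hε
  refine ⟨hg_supp.toSchwartzMap hg_smooth,
    hg_smooth.continuous.integrable_of_hasCompactSupport hg_supp, ?_⟩
  have hgi : Integrable g ν := hg_smooth.continuous.integrable_of_hasCompactSupport hg_supp
  rw [eLpNorm_one_eq_lintegral_enorm] at hg
  have := ENNReal.toReal_mono ENNReal.ofReal_ne_top hg
  rwa [ENNReal.toReal_ofReal hε.le, ← integral_norm_eq_lintegral_enorm (hL.sub hgi).1] at this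

omit [NormedAddCommGroup V] [InnerProductSpace ℝ V] [BorelSpace V] [FiniteDimensional ℝ V]
  [SFinite P] in
lemma integrable_map_withDensity_enorm_iff (hW : Integrable W P) (hX : Measurable X) {h : V → ℂ}
    (hh : Measurable h) :
    Integrable h ((P.withDensity fun ω => ‖W ω‖ₑ).map X) ↔
      Integrable (fun ω => W ω * h (X ω)) P := by
  rw [integrable_map_measure hh.aestronglyMeasurable hX.aemeasurable,
    integrable_withDensity_iff_integrable_smul₀' hW.1.enorm (by simp)]
  have hhX : AEStronglyMeasurable (fun ω => h (X ω)) P := (hh.comp hX).aestronglyMeasurable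
  exact integrable_congr' (hW.1.enorm.ennreal_toReal.aestronglyMeasurable.smul hhX)
    (hW.1.mul hhX) (by simp)

omit [NormedAddCommGroup V] [InnerProductSpace ℝ V] [BorelSpace V] [FiniteDimensional ℝ V]
  [SFinite P] in
lemma integral_norm_map_withDensity_enorm (hW : Integrable W P) (hX : Measurable X) {h : V → ℂ}
    (hh : Measurable h) :
    ∫ x, ‖h x‖ ∂(P.withDensity fun ω => ‖W ω‖ₑ).map X = ∫ ω, ‖W ω * h (X ω)‖ ∂P := by
  rw [integral_map hX.aemeasurable hh.norm.aestronglyMeasurable,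
    integral_withDensity_eq_integral_toReal_smul₀ hW.1.enorm (by simp)]
  simp

omit [SFinite P] in
lemma integrable_weightedFourier_mul_fourier (hw : Integrable (weightedFourier P W X))
    {h : V → ℂ} (hh : Integrable h) :
    Integrable fun v => weightedFourier P W X v * 𝓕 h v :=
  hw.mul_bdd (c := ∫ x, ‖h x‖) (VectorFourier.fourierIntegral_continuous
    Real.continuous_fourierChar continuous_inner hh).aestronglyMeasurable
    (.of_forall fun _ => VectorFourier.norm_fourierIntegral_le_integral_norm _ _ _ _ _)

lemma norm_fourier_sub_fourier_le {h k : V → ℂ} (hh : Integrable h) (hk : Integrable k) (v : V) :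
    ‖𝓕 h v - 𝓕 k v‖ ≤ ∫ x, ‖h x - k x‖ := by
  rw [Real.fourier_eq, Real.fourier_eq,
    ← integral_sub ((Real.fourierIntegral_convergent_iff v).2 hh)
      ((Real.fourierIntegral_convergent_iff v).2 hk)]
  simp only [← smul_sub]
  exact (norm_integral_le_integral_norm _).trans_eq (by simp only [Circle.norm_smul])

omit [SFinite P] in
lemma norm_integral_weightedFourier_mul_fourier_sub_le (hw : Integrable (weightedFourier P W X))
    {h k : V → ℂ} (hh : Integrable h) (hk : Integrable k) :
    ‖(∫ v, weightedFourier P W X v * 𝓕 h v) - ∫ v, weightedFourier P W X v * 𝓕 k v‖ ≤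
      (∫ v, ‖weightedFourier P W X v‖) * ∫ x, ‖h x - k x‖ := by
  rw [← integral_sub (integrable_weightedFourier_mul_fourier hw hh)
    (integrable_weightedFourier_mul_fourier hw hk), ← integral_mul_const]
  refine norm_integral_le_of_norm_le (hw.norm.mul_const _) (.of_forall fun v => ?_)
  rw [← mul_sub, norm_mul]
  gcongr
  exact norm_fourier_sub_fourier_le hh hk v

theorem integral_mul_comp_eq_integral_weightedFourier_mul_fourier (hW : Integrable W P)
    (hX : Measurable X) (hw : Integrable (weightedFourier P W X)) {L : V → ℂ} (hLm : Measurable L)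
    (hL : Integrable L) (hWL : Integrable (fun ω => W ω * L (X ω)) P) :
    ∫ ω, W ω * L (X ω) ∂P = ∫ v, weightedFourier P W X v * 𝓕 L v := by
  set ρ := (P.withDensity fun ω => ‖W ω‖ₑ).map X
  have : IsFiniteMeasure (P.withDensity fun ω => ‖W ω‖ₑ) := isFiniteMeasure_withDensity hW.2.ne
  have : IsFiniteMeasureOnCompacts (volume + ρ) := ⟨fun s hs =>
    ENNReal.add_lt_top.2 ⟨hs.measure_lt_top, measure_lt_top ρ s⟩⟩
  have hLρ : Integrable L ρ := (integrable_map_withDensity_enorm_iff hW hX hLm).2 hWL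
  set c := ∫ v, ‖weightedFourier P W X v‖
  have hc : 0 ≤ c := integral_nonneg fun _ => norm_nonneg _
  -- Both sides are Lipschitz in `L` for the norm of `L¹(volume + ρ)`.
  have key (ε : ℝ) (hε : 0 < ε) :
      ‖(∫ ω, W ω * L (X ω) ∂P) - ∫ v, weightedFourier P W X v * 𝓕 L v‖ ≤ (1 + c) * ε := by
    obtain ⟨ψ, hψ, hLψ⟩ := exists_schwartz_integral_norm_sub_le (hL.add_measure hLρ) hε
    have hψm : Measurable ψ := ψ.continuous.measurable
    have hWψ : Integrable (fun ω => W ω * ψ (X ω)) P :=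
      (integrable_map_withDensity_enorm_iff hW hX hψm).1 hψ.right_of_add_measure
    rw [integral_add_measure (f := fun x => ‖L x - ψ x‖) (hL.sub ψ.integrable).norm
        (hLρ.sub hψ.right_of_add_measure).norm,
      integral_norm_map_withDensity_enorm (h := fun x => L x - ψ x) hW hX (hLm.sub hψm)] at hLψ
    have hleft : ‖(∫ ω, W ω * L (X ω) ∂P) - ∫ ω, W ω * ψ (X ω) ∂P‖ ≤
        ∫ ω, ‖W ω * (L (X ω) - ψ (X ω))‖ ∂P := by
      rw [← integral_sub hWL hWψ]
      simpa only [← mul_sub] using norm_integral_le_integral_norm _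
    have hright := norm_integral_weightedFourier_mul_fourier_sub_le hw ψ.integrable hL
    rw [integral_mul_schwartz_comp hW hX] at hleft
    simp only [norm_sub_rev (ψ _)] at hright
    have := norm_sub_le_norm_sub_add_norm_sub (∫ ω, W ω * L (X ω) ∂P)
      (∫ v, weightedFourier P W X v * 𝓕 (ψ : V → ℂ) v) (∫ v, weightedFourier P W X v * 𝓕 L v)
    have hvol : 0 ≤ ∫ x, ‖L x - ψ x‖ := integral_nonneg fun _ => norm_nonneg _
    have hρ : 0 ≤ ∫ ω, ‖W ω * (L (X ω) - ψ (X ω))‖ ∂P := integral_nonneg fun _ => norm_nonneg _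
    nlinarith
  have hlim : Tendsto (fun ε => (1 + c) * ε) (𝓝[>] 0) (𝓝 0) :=
    (Continuous.tendsto' (by fun_prop) 0 0 (by simp)).mono_left nhdsWithin_le_nhds
  exact sub_eq_zero.1 (norm_le_zero_iff.1
    (ge_of_tendsto hlim (eventually_nhdsWithin_of_forall key)))

lemma measure_le_of_forall_measure_lt_top {E : Type*} [MeasurableSpace E] {κ₁ κ₂ : Measure E}
    (ν : Measure E) [SigmaFinite ν] (h : ∀ s, MeasurableSet s → ν s < ∞ → κ₁ s ≤ κ₂ s) :
    κ₁ ≤ κ₂ := by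
  refine Measure.le_iff.2 fun s hs => ?_
  have hmono : Monotone fun n => s ∩ spanningSets ν n := fun m n hmn =>
    inter_subset_inter_right s (monotone_spanningSets ν hmn)
  rw [← inter_univ s, ← iUnion_spanningSets ν, inter_iUnion, hmono.measure_iUnion,
    hmono.measure_iUnion]
  exact iSup_mono fun n => h _ (hs.inter (measurableSet_spanningSets ν n))
    ((measure_mono inter_subset_right).trans_lt (measure_spanningSets_lt_top ν n))

theorem norm_integral_mul_comp_le (hW : Integrable W P) (hX : Measurable X)
    (hw : Integrable (weightedFourier P W X)) {L : V → ℂ} (hLm : Measurable L)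
    (hL : Integrable L) (hWL : Integrable (fun ω => W ω * L (X ω)) P) :
    ‖∫ ω, W ω * L (X ω) ∂P‖ ≤ (∫ v, ‖weightedFourier P W X v‖) * ∫ x, ‖L x‖ := by
  rw [integral_mul_comp_eq_integral_weightedFourier_mul_fourier hW hX hw hLm hL hWL,
    ← integral_mul_const]
  refine norm_integral_le_of_norm_le (hw.norm.mul_const _) (.of_forall fun v => ?_)
  rw [norm_mul]
  gcongr
  exact VectorFourier.norm_fourierIntegral_le_integral_norm _ _ _ _ _

omit [SFinite P] in
theorem map_le_ofReal_integral_norm_weightedFourier_smul_volume [IsFiniteMeasure P]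
    (hX : Measurable X) (hw : Integrable (weightedFourier P (fun _ => 1) X)) :
    P.map X ≤ ENNReal.ofReal (∫ v, ‖weightedFourier P (fun _ => 1) X v‖) • volume := by
  refine measure_le_of_forall_measure_lt_top volume fun s hs hfin => ?_
  have hL : Integrable (s.indicator fun _ => (1 : ℂ)) (volume : Measure V) :=
    (integrable_indicator_iff hs).2 (integrableOn_const hfin.ne)
  have hcomp : (fun ω => (1 : ℂ) * s.indicator (fun _ => 1) (X ω)) =
      (X ⁻¹' s).indicator fun _ => 1 := funext fun _ => one_mul _
  have hmass := norm_integral_mul_comp_le (integrable_const 1) hX hw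
    (measurable_const.indicator hs) hL
    (hcomp ▸ (integrable_const (1 : ℂ)).indicator (hX hs))
  rw [hcomp, integral_indicator_const _ (hX hs)] at hmass
  simp only [norm_indicator_eq_indicator_norm, norm_one, integral_indicator_const _ hs, smul_eq_mul,
    Complex.real_smul, mul_one, Complex.norm_real, Real.norm_eq_abs,
    abs_of_nonneg measureReal_nonneg] at hmass
  rw [Measure.map_apply hX hs, Measure.smul_apply, smul_eq_mul, ← ofReal_measureReal,
    ← ofReal_measureReal hfin.ne, ← ENNReal.ofReal_mul (integral_nonneg fun _ => norm_nonneg _)]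
  exact ENNReal.ofReal_le_ofReal hmass

end FourierStieltjes

section CrossCovariance

variable {Ω : Type*} [MeasurableSpace Ω] {P : Measure Ω}

/-- The covariance `E[XY] − E[X]E[Y]`, also of complex-valued variables (without conjugation) and
of variables that are not square integrable. -/
noncomputable def crossCov {𝕜 : Type*} [RCLike 𝕜] (P : Measure Ω) (X Y : Ω → 𝕜) : 𝕜 :=
  ∫ ω, X ω * Y ω ∂P - (∫ ω, X ω ∂P) * ∫ ω, Y ω ∂P

lemma crossCov_comm {𝕜 : Type*} [RCLike 𝕜] (X Y : Ω → 𝕜) : crossCov P X Y = crossCov P Y X := by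
  simp only [crossCov, mul_comm]

lemma crossCov_eq_integral_mul_sub {𝕜 : Type*} [RCLike 𝕜] {X Y : Ω → 𝕜} (hX : Integrable X P)
    (hXY : Integrable (fun ω => X ω * Y ω) P) :
    crossCov P X Y = ∫ ω, X ω * (Y ω - ∫ ω', Y ω' ∂P) ∂P := by
  simp only [crossCov, mul_sub]
  rw [integral_sub hXY (hX.mul_const _), integral_mul_const]

lemma crossCov_ofReal (X Y : Ω → ℝ) :
    crossCov P (fun ω => (X ω : ℂ)) (fun ω => (Y ω : ℂ)) = (crossCov P X Y : ℝ) := by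
  simp only [crossCov, ← Complex.ofReal_mul, integral_complex_ofReal, ← Complex.ofReal_sub]

variable {ξ η : Ω → ℝ}

lemma integrable_mul_fourierChar_comp {A : Ω → ℂ} (hA : Integrable A P) (hξ : Measurable ξ)
    (u : ℝ) : Integrable (fun ω => A ω * 𝐞 (u * ξ ω)) P :=
  hA.mul_bdd (c := 1) (by fun_prop : Measurable _).aestronglyMeasurable
    (.of_forall fun _ => (Circle.norm_coe _).le)

lemma weightedFourier_mul_sub_integral {A Y : Ω → ℂ} (hA : Integrable A P)
    (hAY : Integrable (fun ω => A ω * Y ω) P) (hξ : Measurable ξ) (u : ℝ) :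
    weightedFourier P (fun ω => A ω * (Y ω - ∫ ω', Y ω' ∂P)) ξ u =
      crossCov P (fun ω => A ω * 𝐞 (u * ξ ω)) Y := by
  rw [crossCov_eq_integral_mul_sub (integrable_mul_fourierChar_comp hA hξ u)
    ((integrable_mul_fourierChar_comp hAY hξ u).congr (.of_forall fun ω => mul_right_comm ..))]
  exact integral_congr_ae (.of_forall fun ω => mul_right_comm ..)

lemma integrable_weightedFourier_of_norm_le {W : Ω → ℂ} (hW : Integrable W P) (hξ : Measurable ξ)
    {d : ℝ} (hd : ∀ u, ‖weightedFourier P W ξ u‖ ≤ d * (1 + u ^ 2)⁻¹) :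
    Integrable (weightedFourier P W ξ) :=
  (integrable_inv_one_add_sq.const_mul d).mono'
    (continuous_weightedFourier hW hξ).aestronglyMeasurable (.of_forall hd)

lemma crossCov_mul_comp_eq_integral [SFinite P] {A Y : Ω → ℂ} (hA : Integrable A P)
    (hAY : Integrable (fun ω => A ω * Y ω) P) (hξ : Measurable ξ) {d : ℝ}
    (hd : ∀ u, ‖crossCov P (fun ω => A ω * 𝐞 (u * ξ ω)) Y‖ ≤ d * (1 + u ^ 2)⁻¹) {M : ℝ → ℂ}
    (hMm : Measurable M) {B : ℝ} (hMB : ∀ x, ‖M x‖ ≤ B) (hM : Integrable M) :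
    crossCov P (fun ω => A ω * M (ξ ω)) Y =
      ∫ u, crossCov P (fun ω => A ω * 𝐞 (u * ξ ω)) Y * 𝓕 M u := by
  have hMξ : AEStronglyMeasurable (fun ω => M (ξ ω)) P := (hMm.comp hξ).aestronglyMeasurable
  have hMξB : ∀ᵐ ω ∂P, ‖M (ξ ω)‖ ≤ B := .of_forall fun ω => hMB (ξ ω)
  have hW : Integrable (fun ω => A ω * (Y ω - ∫ ω', Y ω' ∂P)) P :=
    (hAY.sub (hA.mul_const (∫ ω', Y ω' ∂P))).congr (.of_forall fun ω => (mul_sub ..).symm)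
  simp only [← weightedFourier_mul_sub_integral hA hAY hξ] at hd ⊢
  rw [← integral_mul_comp_eq_integral_weightedFourier_mul_fourier hW hξ
      (integrable_weightedFourier_of_norm_le hW hξ hd) hMm hM (hW.mul_bdd hMξ hMξB),
    crossCov_eq_integral_mul_sub (hA.mul_bdd hMξ hMξB)
      ((hAY.mul_bdd hMξ hMξB).congr (.of_forall fun ω => mul_right_comm ..))]
  exact integral_congr_ae (.of_forall fun ω => mul_right_comm ..)

lemma norm_crossCov_mul_comp_le [SFinite P] {A Y : Ω → ℂ} (hA : Integrable A P)
    (hAY : Integrable (fun ω => A ω * Y ω) P) (hξ : Measurable ξ) {d : ℝ}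
    (hd : ∀ u, ‖crossCov P (fun ω => A ω * 𝐞 (u * ξ ω)) Y‖ ≤ d * (1 + u ^ 2)⁻¹) {M : ℝ → ℂ}
    (hMm : Measurable M) {B : ℝ} (hMB : ∀ x, ‖M x‖ ≤ B) (hM : Integrable M) {k : ℝ → ℝ}
    (hk : Integrable k) (hMk : ∀ᵐ u, ‖𝓕 M u‖ * (1 + u ^ 2)⁻¹ ≤ k u) :
    ‖crossCov P (fun ω => A ω * M (ξ ω)) Y‖ ≤ d * ∫ u, k u := by
  have hd0 : 0 ≤ d := by simpa using (norm_nonneg _).trans (hd 0)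
  rw [crossCov_mul_comp_eq_integral hA hAY hξ hd hMm hMB hM, ← integral_const_mul]
  refine norm_integral_le_of_norm_le (hk.const_mul d) (hMk.mono fun u hu => ?_)
  calc ‖crossCov P (fun ω => A ω * 𝐞 (u * ξ ω)) Y * 𝓕 M u‖
      ≤ d * (1 + u ^ 2)⁻¹ * ‖𝓕 M u‖ := by
        rw [norm_mul]
        gcongr
        exact hd u
    _ = d * (‖𝓕 M u‖ * (1 + u ^ 2)⁻¹) := by ring
    _ ≤ d * k u := by gcongr

/-- Decay of the covariances of `ξ e^{2πiuξ}` with `e^{2πivη}` in the frequencies `u` and `v`: the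
form in which the joint law of `(ξ, η)` enters the covariance inequality. -/
def HasCovDecay (P : Measure Ω) (ξ η : Ω → ℝ) (D : ℝ) : Prop :=
  ∀ u v : ℝ, ‖crossCov P (fun ω => (ξ ω : ℂ) * 𝐞 (u * ξ ω)) fun ω => (𝐞 (v * η ω) : ℂ)‖ ≤
    D * (1 + u ^ 2)⁻¹ * (1 + v ^ 2)⁻¹

namespace HasCovDecay

variable {D : ℝ}

lemma nonneg (h : HasCovDecay P ξ η D) : 0 ≤ D := by
  simpa using (norm_nonneg _).trans (h 0 0)

lemma neg_left (h : HasCovDecay P ξ η D) : HasCovDecay P (-ξ) η D := by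
  intro u v
  have := h (-u) v
  simp only [crossCov, neg_sq] at this ⊢
  rw [← norm_neg]
  simpa [integral_neg, neg_add_eq_sub] using this

variable [IsFiniteMeasure P] {L : ℝ → ℝ}

lemma norm_crossCov_mul_fourierChar_comp_le (h : HasCovDecay P ξ η D) (hξ : Measurable ξ)
    (hξi : Integrable ξ P) (hη : Measurable η) (hLm : Measurable L) {B : ℝ}
    (hLB : ∀ x, |L x| ≤ B) (hL : Integrable L) (u : ℝ) :
    ‖crossCov P (fun ω => (ξ ω : ℂ) * 𝐞 (u * ξ ω)) fun ω => (L (η ω) : ℂ)‖ ≤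
      D * π * (∫ x, |L x|) * (1 + u ^ 2)⁻¹ := by
  have := norm_crossCov_mul_comp_le (A := 1) (M := fun x => (L x : ℂ)) (integrable_const (1 : ℂ))
    (by simpa using integrable_mul_fourierChar_comp hξi.ofReal hξ u) hη
    (d := D * (1 + u ^ 2)⁻¹) (by simpa [crossCov_comm] using h u) (by fun_prop)
    (by simpa using hLB) hL.ofReal (integrable_inv_one_add_sq.const_mul (∫ x, |L x|))
    (.of_forall fun v => ?_)
  · rw [integral_const_mul, integral_univ_inv_one_add_sq] at this
    simp only [Pi.one_apply, one_mul] at this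
    rw [crossCov_comm]
    exact this.trans_eq (by ring)
  · gcongr
    exact (VectorFourier.norm_fourierIntegral_le_integral_norm _ _ _ _ _).trans_eq (by simp)

theorem abs_crossCov_mul_comp_le (h : HasCovDecay P ξ η D) (hξ : Measurable ξ)
    (hξi : Integrable ξ P) (hη : Measurable η) (hLm : Measurable L) {B : ℝ}
    (hLB : ∀ x, |L x| ≤ B) (hL : Integrable L) {M : ℝ → ℝ} (hMm : Measurable M) {B' : ℝ}
    (hMB : ∀ x, |M x| ≤ B') (hM : Integrable M) {k : ℝ → ℝ} (hk : Integrable k)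
    (hMk : ∀ᵐ u, ‖𝓕 (fun x => (M x : ℂ)) u‖ * (1 + u ^ 2)⁻¹ ≤ k u) :
    |crossCov P (fun ω => ξ ω * M (ξ ω)) fun ω => L (η ω)| ≤
      D * π * (∫ x, |L x|) * ∫ u, k u := by
  rw [← Real.norm_eq_abs, ← Complex.norm_real, ← crossCov_ofReal]
  simp only [Complex.ofReal_mul]
  have hLη : AEStronglyMeasurable (fun ω => (L (η ω) : ℂ)) P :=
    (by fun_prop : Measurable _).aestronglyMeasurable
  exact norm_crossCov_mul_comp_le hξi.ofReal
    (hξi.ofReal.mul_bdd hLη (.of_forall fun ω => by simpa using hLB (η ω))) hξ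
    (h.norm_crossCov_mul_fourierChar_comp_le hξ hξi hη hLm hLB hL) (M := fun x => (M x : ℂ))
    (by fun_prop) (by simpa using hMB) hM.ofReal hk hMk

end HasCovDecay

end CrossCovariance

section DecreasingTail

/-- `M` vanishes on `(-∞, b]` and is nonnegative and non-increasing on `(b, ∞)`; these are the
building blocks of `x ↦ K x / x` for a function `K` as in (K2), cut off at `b`. -/
structure IsDecreasingTail (b : ℝ) (M : ℝ → ℝ) : Prop where
  eq_zero : ∀ x ≤ b, M x = 0
  nonneg : ∀ x, 0 ≤ M x
  antitoneOn : AntitoneOn M (Ioi b)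

namespace IsDecreasingTail

variable {b : ℝ} {M : ℝ → ℝ}

lemma measurable (hM : IsDecreasingTail b M) : Measurable M := by
  refine measurable_of_restrict_of_restrict_compl (measurableSet_Ioi (a := b)) ?_ ?_
  · exact Antitone.measurable fun x y hxy => hM.antitoneOn x.2 y.2 hxy
  · have : (Ioi b)ᶜ.domRestrict M = fun _ => 0 := funext fun x => hM.eq_zero x (not_lt.1 x.2)
    rw [this]
    exact measurable_const

lemma indicator_Iic (hM : IsDecreasingTail b M) (n : ℝ) :
    IsDecreasingTail b ((Iic n).indicator M) where
  eq_zero x hx := by simp [indicator, hM.eq_zero x hx]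
  nonneg := indicator_nonneg fun x _ => hM.nonneg x
  antitoneOn x hx y hy hxy := by
    simp only [indicator, mem_Iic]
    split_ifs with hyn hxn
    · exact hM.antitoneOn hx hy hxy
    · exact absurd (hxy.trans hyn) hxn
    · exact hM.nonneg x
    · rfl

lemma integral_abs_sub_comp_add (hM : IsDecreasingTail b M) (hMi : Integrable M) {h : ℝ}
    (hh : 0 ≤ h) : ∫ x, |M x - M (x + h)| = 2 * ∫ x in Ioc b (b + h), M x := by
  -- `M - M (· + h)` is nonnegative except on `(b - h, b]`, where it equals `- M (· + h)`.
  have habs (x : ℝ) :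
      |M x - M (x + h)| = M x - M (x + h) + 2 * (Iic (b + h)).indicator M (x + h) := by
    by_cases hx : x ≤ b
    · rw [hM.eq_zero x hx, indicator_of_mem (by simpa using hx), zero_sub, abs_neg,
        abs_of_nonneg (hM.nonneg _)]
      ring
    · rw [not_le] at hx
      have := hM.antitoneOn hx (mem_Ioi.2 (by linarith : b < x + h)) (by linarith)
      rw [indicator_of_notMem (by simpa using hx), abs_of_nonneg (by linarith)]
      ring
  have hind : (Iic (b + h)).indicator M = (Ioc b (b + h)).indicator M := by
    ext x
    by_cases hx : x ≤ b
    · simp [indicator, hM.eq_zero x hx]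
    · simp [indicator, not_le.1 hx]
  have hindi : Integrable ((Ioc b (b + h)).indicator M) := hMi.indicator measurableSet_Ioc
  have hsub : Integrable fun x => M x - M (x + h) := hMi.sub (hMi.comp_add_right h)
  simp_rw [habs, hind]
  rw [integral_add hsub ((hindi.comp_add_right h).const_mul 2),
    integral_sub hMi (hMi.comp_add_right h), integral_add_right_eq_self M h, integral_const_mul,
    integral_add_right_eq_self ((Ioc b (b + h)).indicator M) h,
    integral_indicator measurableSet_Ioc]
  ring

lemma integral_abs_sub_comp_sub (hM : IsDecreasingTail b M) (hMi : Integrable M) {h : ℝ}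
    (hh : 0 ≤ h) : ∫ x, |M x - M (x - h)| = 2 * ∫ x in Ioc b (b + h), M x := by
  rw [← hM.integral_abs_sub_comp_add hMi hh,
    ← integral_add_right_eq_self (fun x => |M x - M (x - h)|) h]
  simp only [add_sub_cancel_right, abs_sub_comm]

theorem norm_fourier_le (hM : IsDecreasingTail b M) (hMi : Integrable M) {v : ℝ} (hv : v ≠ 0) :
    ‖𝓕 (fun x => (M x : ℂ)) v‖ ≤ ∫ x in Ioc b (b + (2 * |v|)⁻¹), M x := by
  set h := (2 * |v|)⁻¹ with hh
  have hhalf : ∫ x, |M x - M (x + (1 / (2 * ‖v‖ ^ 2)) • v)| = 2 * ∫ x in Ioc b (b + h), M x := by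
    have hh0 : 0 ≤ h := by positivity
    rcases lt_or_gt_of_ne hv with hneg | hpos
    · have : (1 / (2 * ‖v‖ ^ 2)) • v = -h := by
        rw [hh, Real.norm_eq_abs, abs_of_neg hneg, smul_eq_mul]
        field_simp
      simpa only [this, ← sub_eq_add_neg] using hM.integral_abs_sub_comp_sub hMi hh0
    · have : (1 / (2 * ‖v‖ ^ 2)) • v = h := by
        rw [hh, Real.norm_eq_abs, abs_of_pos hpos, smul_eq_mul]
        field_simp
      simpa only [this] using hM.integral_abs_sub_comp_add hMi hh0
  calc ‖𝓕 (fun x => (M x : ℂ)) v‖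
      ≤ 1 / 2 * ∫ x, |M x - M (x + (1 / (2 * ‖v‖ ^ 2)) • v)| := by
        rw [Real.fourier_eq, fourierIntegral_eq_half_sub_half_period_translate hv hMi.ofReal,
          norm_smul]
        norm_num
        refine (norm_integral_le_integral_norm _).trans_eq ?_
        simp only [Circle.norm_smul, ← Complex.ofReal_sub, Complex.norm_real, Real.norm_eq_abs]
    _ = ∫ x in Ioc b (b + h), M x := by rw [hhalf]; ring

variable {β c : ℝ}

theorem norm_fourier_le_mul_min (hM : IsDecreasingTail b M) (hMi : Integrable M) (hb : 0 < b)
    (hc : 0 ≤ c) (hβ0 : 0 < β) (hβ1 : β ≤ 1) (hMc : ∀ x > b, M x ≤ c * x ^ (β - 1)) {v : ℝ}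
    (hv : v ≠ 0) :
    ‖𝓕 (fun x => (M x : ℂ)) v‖ ≤ c * min (b ^ (β - 1) * |v|⁻¹) (|v| ^ (-β) / β) := by
  have hvp : 0 < |v| := abs_pos.2 hv
  set h := (2 * |v|)⁻¹
  have hh : 0 < h := by positivity
  have hhv : h ≤ |v|⁻¹ := inv_anti₀ hvp (by linarith)
  have hpow : IntegrableOn (fun x : ℝ => x ^ (β - 1)) (Ioc b (b + h)) := by
    rw [← intervalIntegrable_iff_integrableOn_Ioc_of_le (by linarith)]
    exact intervalIntegral.intervalIntegrable_rpow' (by linarith)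
  have hle : ‖𝓕 (fun x => (M x : ℂ)) v‖ ≤ c * ∫ x in Ioc b (b + h), x ^ (β - 1) := by
    rw [← integral_const_mul]
    exact (hM.norm_fourier_le hMi hv).trans (setIntegral_mono_on hMi.integrableOn
      (hpow.const_mul c) measurableSet_Ioc fun x hx => hMc x hx.1)
  refine hle.trans (mul_le_mul_of_nonneg_left (le_min ?_ ?_) hc)
  · calc ∫ x in Ioc b (b + h), x ^ (β - 1)
        ≤ ∫ _ in Ioc b (b + h), b ^ (β - 1) :=
          setIntegral_mono_on hpow (by simp) measurableSet_Ioc fun x hx =>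
            Real.rpow_le_rpow_of_nonpos hb hx.1.le (by linarith)
      _ = b ^ (β - 1) * h := by simp [Measure.real, hh.le, mul_comm]
      _ ≤ b ^ (β - 1) * |v|⁻¹ := by gcongr
  · have hval : ∫ x in Ioc b (b + h), x ^ (β - 1) = ((b + h) ^ β - b ^ β) / β := by
      rw [← intervalIntegral.integral_of_le (by linarith), integral_rpow (Or.inl (by linarith)),
        sub_add_cancel]
    rw [hval]
    gcongr
    calc (b + h) ^ β - b ^ β ≤ h ^ β :=
          sub_le_iff_le_add'.2 (Real.rpow_add_le_add_rpow hb.le hh.le hβ0.le hβ1)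
      _ ≤ |v|⁻¹ ^ β := by gcongr
      _ = |v| ^ (-β) := by rw [Real.inv_rpow hvp.le, Real.rpow_neg hvp.le]

end IsDecreasingTail

/-- A majorant on `(0, ∞)` of `min (b ^ (β - 1) * v⁻¹) (v ^ (-β) / β) * (1 + v ^ 2)⁻¹`, the bound on
the Fourier transform of a decreasing tail against the weight of `HasCovDecay`; zero on
`(-∞, 0]`. -/
noncomputable def tailKernel (β b : ℝ) : ℝ → ℝ := fun v =>
  (Ioc 0 b⁻¹).indicator (fun v => v ^ (-β) / β) v +
    (Ioc b⁻¹ 1).indicator (fun v => b ^ (β - 1) * v⁻¹) v +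
    (Ioi 1).indicator (fun v => b ^ (β - 1) * v ^ (-2 : ℝ)) v

section TailKernel

variable {β b : ℝ}

lemma tailKernel_nonneg (hβ0 : 0 ≤ β) (hb : 0 < b) (v : ℝ) : 0 ≤ tailKernel β b v := by
  have hb' : 0 < b⁻¹ := inv_pos.2 hb
  refine add_nonneg (add_nonneg (indicator_nonneg (fun x hx => ?_) v)
    (indicator_nonneg (fun x hx => ?_) v)) (indicator_nonneg (fun x hx => ?_) v)
  · have := hx.1
    positivity
  · have := hb'.trans hx.1
    positivity
  · have := zero_lt_one.trans (mem_Ioi.1 hx)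
    positivity

lemma integrableOn_tailKernel_pieces (hβ : β < 1) (hb : 1 ≤ b) :
    IntegrableOn (fun v : ℝ => v ^ (-β) / β) (Ioc 0 b⁻¹) ∧
      IntegrableOn (fun v : ℝ => b ^ (β - 1) * v⁻¹) (Ioc b⁻¹ 1) ∧
      IntegrableOn (fun v : ℝ => b ^ (β - 1) * v ^ (-2 : ℝ)) (Ioi 1) := by
  have hbi : 0 < b⁻¹ := by positivity
  have hbi1 : b⁻¹ ≤ 1 := inv_le_one_of_one_le₀ hb
  refine ⟨?_, ?_, (integrableOn_Ioi_rpow_of_lt (by norm_num) one_pos).const_mul _⟩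
  · rw [← intervalIntegrable_iff_integrableOn_Ioc_of_le hbi.le]
    exact (intervalIntegral.intervalIntegrable_rpow' (by linarith)).div_const β
  · rw [← intervalIntegrable_iff_integrableOn_Ioc_of_le hbi1]
    refine (intervalIntegral.intervalIntegrable_inv (fun v hv => ?_) continuousOn_id).const_mul _
    exact (hbi.trans_le (uIcc_of_le hbi1 ▸ hv).1).ne'

lemma integrable_tailKernel (hβ : β < 1) (hb : 1 ≤ b) : Integrable (tailKernel β b) :=
  have ⟨h₁, h₂, h₃⟩ := integrableOn_tailKernel_pieces hβ hb
  ((h₁.integrable_indicator measurableSet_Ioc).add (h₂.integrable_indicator measurableSet_Ioc)).add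
    (h₃.integrable_indicator measurableSet_Ioi)

lemma integral_tailKernel (hβ : β < 1) (hb : 1 ≤ b) :
    ∫ v, tailKernel β b v = b ^ (β - 1) * ((β * (1 - β))⁻¹ + log b + 1) := by
  have hb0 : 0 < b := by linarith
  have hbi : 0 < b⁻¹ := by positivity
  have hbi1 : b⁻¹ ≤ 1 := inv_le_one_of_one_le₀ hb
  have v₁ : ∫ v in Ioc 0 b⁻¹, v ^ (-β) / β = b ^ (β - 1) * (β * (1 - β))⁻¹ := by
    rw [← intervalIntegral.integral_of_le hbi.le, intervalIntegral.integral_div,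
      integral_rpow (Or.inl (by linarith)), Real.zero_rpow (by linarith), Real.inv_rpow hb0.le,
      ← Real.rpow_neg hb0.le, neg_add_eq_sub, neg_sub, sub_zero, div_div, mul_comm (1 - β),
      div_eq_mul_inv]
  have v₂ : ∫ v in Ioc b⁻¹ 1, b ^ (β - 1) * v⁻¹ = b ^ (β - 1) * log b := by
    rw [← intervalIntegral.integral_of_le hbi1, intervalIntegral.integral_const_mul,
      integral_inv_of_pos hbi one_pos]
    simp
  have v₃ : ∫ v in Ioi (1 : ℝ), b ^ (β - 1) * v ^ (-2 : ℝ) = b ^ (β - 1) := by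
    rw [integral_const_mul, integral_Ioi_rpow_of_lt (by norm_num) one_pos]
    norm_num
  obtain ⟨h₁, h₂, h₃⟩ := integrableOn_tailKernel_pieces hβ hb
  have i₁ := h₁.integrable_indicator measurableSet_Ioc
  have i₂ := h₂.integrable_indicator measurableSet_Ioc
  have i₃ := h₃.integrable_indicator measurableSet_Ioi
  unfold tailKernel
  rw [integral_add (f := fun v => _ + _) (i₁.add i₂) i₃, integral_add i₁ i₂,
    integral_indicator measurableSet_Ioc, integral_indicator measurableSet_Ioc,
    integral_indicator measurableSet_Ioi, v₁, v₂, v₃]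
  ring

lemma min_mul_inv_one_add_sq_le_tailKernel (hβ0 : 0 ≤ β) (hb : 1 ≤ b) {v : ℝ} (hv : 0 < v) :
    min (b ^ (β - 1) * v⁻¹) (v ^ (-β) / β) * (1 + v ^ 2)⁻¹ ≤ tailKernel β b v := by
  have : 0 < b := by linarith
  have hbi1 : b⁻¹ ≤ 1 := inv_le_one_of_one_le₀ hb
  have hsq : (1 + v ^ 2)⁻¹ ≤ 1 := inv_le_one_of_one_le₀ (by nlinarith)
  rcases le_or_gt v b⁻¹ with hvb | hvb
  · have : tailKernel β b v = v ^ (-β) / β := by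
      simp [tailKernel, indicator, hv, hvb, hvb.not_gt, (hvb.trans hbi1).not_gt]
    rw [this]
    exact (mul_le_of_le_one_right (by positivity) hsq).trans (min_le_right ..)
  rcases le_or_gt v 1 with hv1 | hv1
  · have : tailKernel β b v = b ^ (β - 1) * v⁻¹ := by
      simp [tailKernel, indicator, hvb, hvb.not_ge, hv1, hv1.not_gt]
    rw [this]
    exact (mul_le_of_le_one_right (by positivity) hsq).trans (min_le_left ..)
  · have : tailKernel β b v = b ^ (β - 1) * v ^ (-2 : ℝ) := by
      simp [tailKernel, indicator, hvb.not_ge, hv1, hv1.not_ge]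
    have hpow : v ^ (-2 : ℝ) = (v ^ 2)⁻¹ := by rw [Real.rpow_neg hv.le, Real.rpow_two]
    rw [this, hpow]
    gcongr
    · exact (min_le_left ..).trans (mul_le_of_le_one_right (by positivity)
        (inv_le_one_of_one_le₀ hv1.le))
    · linarith

lemma integral_tailKernel_le (hβ0 : 0 < β) (hβ1 : β < 1) (hb : 1 ≤ b) :
    ∫ v, tailKernel β b v ≤
      (((β * (1 - β))⁻¹ + 1) / log 2 + 1) * (b ^ (β - 1) * log (b + 1)) := by
  have hlog2 : 0 < log 2 := log_pos one_lt_two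
  have hlog : log 2 ≤ log (b + 1) := log_le_log two_pos (by linarith)
  have hlogb : log b ≤ log (b + 1) := log_le_log (by linarith) (by linarith)
  have : 0 ≤ (β * (1 - β))⁻¹ + 1 := by
    have := sub_pos.2 hβ1
    positivity
  calc ∫ v, tailKernel β b v
      = b ^ (β - 1) * (((β * (1 - β))⁻¹ + 1) / log 2 * log 2 + log b) := by
        rw [integral_tailKernel hβ1 hb, div_mul_cancel₀ _ hlog2.ne']
        ring
    _ ≤ b ^ (β - 1) *
          (((β * (1 - β))⁻¹ + 1) / log 2 * log (b + 1) + log (b + 1)) := by gcongr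
    _ = _ := by ring

end TailKernel

end DecreasingTail

section MeasureComparison

variable {E : Type*} [MeasurableSpace E]

lemma integral_sub_integral_le_of_le_add {μ₁ μ₂ μ₃ : Measure E} (h₁ : μ₁ ≤ μ₂ + μ₃)
    {L : E → ℝ} (hL : 0 ≤ L) (hL₂ : Integrable L μ₂) (hL₃ : Integrable L μ₃) :
    (∫ x, L x ∂μ₁) - ∫ x, L x ∂μ₂ ≤ ∫ x, L x ∂μ₃ := by
  rw [sub_le_iff_le_add', ← integral_add_measure hL₂ hL₃]
  exact integral_mono_measure h₁ (.of_forall hL) (hL₂.add_measure hL₃)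

lemma abs_integral_sub_integral_le_of_le_add {μ₁ μ₂ μ₃ : Measure E} (h₁ : μ₁ ≤ μ₂ + μ₃)
    (h₂ : μ₂ ≤ μ₁ + μ₃) {L : E → ℝ} (hL₂ : Integrable L μ₂) (hL₃ : Integrable L μ₃) :
    |(∫ x, L x ∂μ₁) - ∫ x, L x ∂μ₂| ≤ ∫ x, |L x| ∂μ₃ := by
  have hL₁ : Integrable L μ₁ := (hL₂.add_measure hL₃).mono_measure h₁
  have hp {m : Measure E} (hm : Integrable L m) : Integrable (fun x => (L x)⁺) m := hm.pos_part
  have hn {m : Measure E} (hm : Integrable L m) : Integrable (fun x => (L x)⁻) m := hm.neg_part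
  have hsplit {m : Measure E} (hm : Integrable L m) :
      ∫ x, L x ∂m = (∫ x, (L x)⁺ ∂m) - ∫ x, (L x)⁻ ∂m := by
    simp only [← integral_sub (hp hm) (hn hm), posPart_sub_negPart]
  have habs : ∫ x, |L x| ∂μ₃ = (∫ x, (L x)⁺ ∂μ₃) + ∫ x, (L x)⁻ ∂μ₃ := by
    simp only [← integral_add (hp hL₃) (hn hL₃), posPart_add_negPart]
  have hL0 : (0 : E → ℝ) ≤ fun x => (L x)⁺ := fun x => posPart_nonneg _
  have hL0' : (0 : E → ℝ) ≤ fun x => (L x)⁻ := fun x => negPart_nonneg _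
  rw [hsplit hL₁, hsplit hL₂, habs, abs_le]
  constructor
  · linarith [integral_sub_integral_le_of_le_add h₂ hL0 (hp hL₁) (hp hL₃),
      integral_sub_integral_le_of_le_add h₁ hL0' (hn hL₂) (hn hL₃)]
  · linarith [integral_sub_integral_le_of_le_add h₁ hL0 (hp hL₂) (hp hL₃),
      integral_sub_integral_le_of_le_add h₂ hL0' (hn hL₁) (hn hL₃)]

variable {Ω : Type*} [MeasurableSpace Ω] {P : Measure Ω} {X : Ω → ℝ} {η : Ω → E}

lemma map_withDensity_ofReal_apply (hX0 : 0 ≤ X) (hX : Integrable X P) (hη : Measurable η)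
    {s : Set E} (hs : MeasurableSet s) :
    (P.withDensity fun ω => ENNReal.ofReal (X ω)).map η s =
      ENNReal.ofReal (∫ ω, X ω * s.indicator 1 (η ω) ∂P) := by
  have : (fun ω => X ω * s.indicator 1 (η ω)) = (η ⁻¹' s).indicator X := by
    ext ω
    by_cases h : η ω ∈ s <;> simp [indicator, h]
  rw [Measure.map_apply hη hs, withDensity_apply _ (hη hs), this, integral_indicator (hη hs),
    ofReal_integral_eq_lintegral_ofReal hX.integrableOn (.of_forall hX0)]

lemma crossCov_indicator_comp (X : Ω → ℝ) (hη : Measurable η) {s : Set E}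
    (hs : MeasurableSet s) : crossCov P X (fun ω => s.indicator 1 (η ω)) =
      (∫ ω, X ω * s.indicator 1 (η ω) ∂P) - (∫ ω, X ω ∂P) * (P.map η).real s := by
  have : (fun ω => s.indicator (1 : E → ℝ) (η ω)) = (η ⁻¹' s).indicator 1 := rfl
  rw [crossCov, this, integral_indicator_one (hη hs), map_measureReal_apply hη hs]

variable [IsFiniteMeasure P] {m : Measure E} {Q : ℝ}

lemma map_withDensity_le_add_and_le_add [SigmaFinite m] (hX0 : 0 ≤ X) (hX : Integrable X P)
    (hη : Measurable η) (hQ : 0 ≤ Q)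
    (h : ∀ s, MeasurableSet s → m s < ∞ →
      |crossCov P X fun ω => s.indicator 1 (η ω)| ≤ Q * m.real s) :
    (P.withDensity fun ω => ENNReal.ofReal (X ω)).map η ≤
        ENNReal.ofReal (∫ ω, X ω ∂P) • P.map η + ENNReal.ofReal Q • m ∧
      ENNReal.ofReal (∫ ω, X ω ∂P) • P.map η ≤
        (P.withDensity fun ω => ENNReal.ofReal (X ω)).map η + ENNReal.ofReal Q • m := by
  have hE : 0 ≤ ∫ ω, X ω ∂P := integral_nonneg hX0
  have key (s : Set E) (hs : MeasurableSet s) (hms : m s < ∞) := abs_le.1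
    (crossCov_indicator_comp (P := P) X hη hs ▸ h s hs hms)
  have hνs (s : Set E) : ENNReal.ofReal (∫ ω, X ω ∂P) * P.map η s =
      ENNReal.ofReal ((∫ ω, X ω ∂P) * (P.map η).real s) := by
    rw [ENNReal.ofReal_mul hE, ofReal_measureReal]
  have hms' (s : Set E) (hms : m s < ∞) :
      ENNReal.ofReal Q * m s = ENNReal.ofReal (Q * m.real s) := by
    rw [ENNReal.ofReal_mul hQ, ofReal_measureReal hms.ne]
  have hXs (s : Set E) : 0 ≤ ∫ ω, X ω * s.indicator 1 (η ω) ∂P :=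
    integral_nonneg fun ω => mul_nonneg (hX0 ω) (indicator_nonneg (fun _ _ => zero_le_one) _)
  constructor <;> refine measure_le_of_forall_measure_lt_top m fun s hs hms => ?_ <;>
    simp only [Measure.add_apply, Measure.smul_apply, smul_eq_mul, hνs, hms' s hms,
      map_withDensity_ofReal_apply hX0 hX hη hs] <;>
    rw [← ENNReal.ofReal_add (by first | exact hXs s | positivity) (by positivity)] <;>
    exact ENNReal.ofReal_le_ofReal (by linarith [key s hs hms])

/-- Integrability of `X * L ∘ η` is not clear a priori for unbounded `L`; it comes out of comparing
the measures `E[X; η ∈ ·]` and `E[X] P(η ∈ ·)`. -/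
theorem integrable_mul_comp_and_abs_crossCov_comp_le [SigmaFinite m] (hXm : Measurable X)
    (hX0 : 0 ≤ X) (hX : Integrable X P) (hη : Measurable η) (hQ : 0 ≤ Q)
    (h : ∀ s, MeasurableSet s → m s < ∞ →
      |crossCov P X fun ω => s.indicator 1 (η ω)| ≤ Q * m.real s)
    {L : E → ℝ} (hLη : Integrable L (P.map η)) (hL : Integrable L m) :
    Integrable (fun ω => X ω * L (η ω)) P ∧
      |crossCov P X fun ω => L (η ω)| ≤ Q * ∫ x, |L x| ∂m := by
  obtain ⟨h₁, h₂⟩ := map_withDensity_le_add_and_le_add hX0 hX hη hQ h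
  set μ₁ := (P.withDensity fun ω => ENNReal.ofReal (X ω)).map η with hμ₁
  have hL₂ : Integrable L (ENNReal.ofReal (∫ ω, X ω ∂P) • P.map η) :=
    hLη.smul_measure ENNReal.ofReal_ne_top
  have hL₃ : Integrable L (ENNReal.ofReal Q • m) := hL.smul_measure ENNReal.ofReal_ne_top
  have hL₁ : Integrable L μ₁ := (hL₂.add_measure hL₃).mono_measure h₁
  have hdens : AEMeasurable (fun ω => (X ω).toNNReal) P := by fun_prop
  have e : (fun ω => X ω * L (η ω)) = fun ω => (X ω).toNNReal • L (η ω) := by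
    ext ω
    rw [NNReal.smul_def, Real.coe_toNNReal _ (hX0 ω), smul_eq_mul]
  have hint : ∫ ω, X ω * L (η ω) ∂P = ∫ x, L x ∂μ₁ := by
    rw [hμ₁, integral_map hη.aemeasurable hL₁.aestronglyMeasurable, e]
    exact (integral_withDensity_eq_integral_smul₀ hdens _).symm
  refine ⟨?_, ?_⟩
  · rw [e]
    exact (integrable_withDensity_iff_integrable_smul₀ hdens).1
      ((integrable_map_measure hL₁.aestronglyMeasurable hη.aemeasurable).1 hL₁)
  · have := abs_integral_sub_integral_le_of_le_add h₁ h₂ hL₂ hL₃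
    rwa [integral_smul_measure, integral_smul_measure, ENNReal.toReal_ofReal hQ,
      ENNReal.toReal_ofReal (integral_nonneg hX0), smul_eq_mul, smul_eq_mul, ← hint,
      integral_map hη.aemeasurable hLη.aestronglyMeasurable] at this

end MeasureComparison

section TailCovariance

variable {Ω : Type*} [MeasurableSpace Ω] {P : Measure Ω}

lemma tendsto_crossCov_of_abs_le {X Y : Ω → ℝ} {Xn : ℕ → Ω → ℝ}
    (hXn : ∀ n, AEStronglyMeasurable (Xn n) P) (hY : AEStronglyMeasurable Y P)
    (hX : Integrable X P) (hXY : Integrable (fun ω => X ω * Y ω) P)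
    (hle : ∀ n ω, |Xn n ω| ≤ |X ω|) (hlim : ∀ ω, Tendsto (Xn · ω) atTop (𝓝 (X ω))) :
    Tendsto (fun n => crossCov P (Xn n) Y) atTop (𝓝 (crossCov P X Y)) := by
  refine .sub ?_ (.mul_const _ ?_)
  · refine tendsto_integral_of_dominated_convergence _ (fun n => (hXn n).mul hY) hXY.abs
      (fun n => .of_forall fun ω => ?_) (.of_forall fun ω => (hlim ω).mul_const _)
    rw [Real.norm_eq_abs, abs_mul, abs_mul]
    exact mul_le_mul_of_nonneg_right (hle n ω) (abs_nonneg _)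
  · exact tendsto_integral_of_dominated_convergence _ hXn hX.abs (fun n => .of_forall (hle n))
      (.of_forall hlim)

lemma tendsto_indicator_Iic_natCast (M : ℝ → ℝ) (x : ℝ) :
    Tendsto (fun n : ℕ => (Iic (n : ℝ)).indicator M x) atTop (𝓝 (M x)) := by
  refine tendsto_const_nhds.congr' ?_
  filter_upwards [eventually_ge_atTop ⌈x⌉₊] with n hn
  exact (indicator_of_mem (mem_Iic.2 ((Nat.le_ceil x).trans (by exact_mod_cast hn))) M).symm

namespace IsDecreasingTail

variable {b β c : ℝ} {M : ℝ → ℝ}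

lemma abs_le (hM : IsDecreasingTail b M) (hb : 0 < b) (hc : 0 ≤ c) (hβ : β ≤ 1)
    (hMc : ∀ x > b, M x ≤ c * x ^ (β - 1)) (x : ℝ) : |M x| ≤ c * b ^ (β - 1) := by
  rw [abs_of_nonneg (hM.nonneg x)]
  rcases le_or_gt x b with hx | hx
  · rw [hM.eq_zero x hx]
    positivity
  · exact (hMc x hx).trans (mul_le_mul_of_nonneg_left
      (Real.rpow_le_rpow_of_nonpos hb hx.le (by linarith)) hc)

lemma indicator_Iic_le (hM : IsDecreasingTail b M) (n x : ℝ) : (Iic n).indicator M x ≤ M x :=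
  indicator_le_self' (fun _ _ => hM.nonneg _) x

lemma integrable_indicator_Iic (hM : IsDecreasingTail b M) {B : ℝ} (hB : ∀ x, |M x| ≤ B) (n : ℝ) :
    Integrable ((Iic n).indicator M) := by
  have : (Iic n).indicator M = (Ioc b n).indicator M := by
    ext x
    by_cases hx : x ≤ b
    · simp [indicator, hM.eq_zero x hx]
    · simp [indicator, not_le.1 hx]
  rw [this, integrable_indicator_iff measurableSet_Ioc]
  exact .of_bound (by simp) hM.measurable.aestronglyMeasurable B (.of_forall hB)

lemma integrable_mul_comp (hM : IsDecreasingTail b M) {B : ℝ} (hB : ∀ x, |M x| ≤ B) {ξ : Ω → ℝ}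
    (hξ : Measurable ξ) (hξi : Integrable ξ P) : Integrable (fun ω => ξ ω * M (ξ ω)) P :=
  hξi.mul_bdd (hM.measurable.comp hξ).aestronglyMeasurable (.of_forall fun ω => hB (ξ ω))

lemma norm_fourier_mul_inv_one_add_sq_le (hM : IsDecreasingTail b M) (hMi : Integrable M)
    (hb : 1 ≤ b) (hc : 0 ≤ c) (hβ0 : 0 < β) (hβ1 : β < 1) (hMc : ∀ x > b, M x ≤ c * x ^ (β - 1))
    {v : ℝ} (hv : v ≠ 0) :
    ‖𝓕 (fun x => (M x : ℂ)) v‖ * (1 + v ^ 2)⁻¹ ≤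
      c * (tailKernel β b v + tailKernel β b (-v)) := by
  have hb0 : 0 < b := by linarith
  calc ‖𝓕 (fun x => (M x : ℂ)) v‖ * (1 + v ^ 2)⁻¹
      ≤ c * min (b ^ (β - 1) * |v|⁻¹) (|v| ^ (-β) / β) * (1 + v ^ 2)⁻¹ := by
        gcongr
        exact hM.norm_fourier_le_mul_min hMi hb0 hc hβ0 hβ1.le hMc hv
    _ ≤ c * tailKernel β b |v| := by
        rw [mul_assoc, ← sq_abs v]
        gcongr
        exact min_mul_inv_one_add_sq_le_tailKernel hβ0.le hb (abs_pos.2 hv)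
    _ ≤ c * (tailKernel β b v + tailKernel β b (-v)) := by
        gcongr
        rcases abs_choice v with h | h <;> rw [h]
        · exact le_add_of_nonneg_right (tailKernel_nonneg hβ0.le hb0 _)
        · exact le_add_of_nonneg_left (tailKernel_nonneg hβ0.le hb0 _)

end IsDecreasingTail

namespace HasCovDecay

variable [IsFiniteMeasure P] {ξ η : Ω → ℝ} {D b β c : ℝ} {M : ℝ → ℝ}

lemma abs_crossCov_tail_le_of_integrable (h : HasCovDecay P ξ η D) (hξ : Measurable ξ)
    (hξi : Integrable ξ P) (hη : Measurable η) (hb : 1 ≤ b) (hc : 0 ≤ c) (hβ0 : 0 < β)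
    (hβ1 : β < 1) (hM : IsDecreasingTail b M) (hMi : Integrable M)
    (hMc : ∀ x > b, M x ≤ c * x ^ (β - 1)) {L : ℝ → ℝ} (hLm : Measurable L) {B : ℝ}
    (hLB : ∀ x, |L x| ≤ B) (hL : Integrable L) :
    |crossCov P (fun ω => ξ ω * M (ξ ω)) fun ω => L (η ω)| ≤
      2 * π * c * D * (∫ v, tailKernel β b v) * ∫ x, |L x| := by
  have hk := integrable_tailKernel hβ1 hb
  have := h.abs_crossCov_mul_comp_le hξ hξi hη hLm hLB hL hM.measurable
    (hM.abs_le (by linarith) hc hβ1.le hMc) hMi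
    (k := fun v => c * (tailKernel β b v + tailKernel β b (-v)))
    ((hk.add hk.comp_neg).const_mul c) ?_
  · rw [integral_const_mul, integral_add hk hk.comp_neg,
      integral_neg_eq_self (tailKernel β b) volume] at this
    exact this.trans_eq (by ring)
  · filter_upwards [Measure.ae_ne volume 0] with v hv
    exact hM.norm_fourier_mul_inv_one_add_sq_le hMi hb hc hβ0 hβ1 hMc hv

lemma abs_crossCov_tail_le_of_bounded (h : HasCovDecay P ξ η D) (hξ : Measurable ξ)
    (hξi : Integrable ξ P) (hη : Measurable η) (hb : 1 ≤ b) (hc : 0 ≤ c) (hβ0 : 0 < β)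
    (hβ1 : β < 1) (hM : IsDecreasingTail b M) (hMc : ∀ x > b, M x ≤ c * x ^ (β - 1)) {L : ℝ → ℝ}
    (hLm : Measurable L) {B : ℝ} (hLB : ∀ x, |L x| ≤ B) (hL : Integrable L) :
    |crossCov P (fun ω => ξ ω * M (ξ ω)) fun ω => L (η ω)| ≤
      2 * π * c * D * (∫ v, tailKernel β b v) * ∫ x, |L x| := by
  have hMB := hM.abs_le (by linarith) hc hβ1.le hMc
  have hX := hM.integrable_mul_comp hMB hξ hξi
  have hLη : AEStronglyMeasurable (fun ω => L (η ω)) P := (hLm.comp hη).aestronglyMeasurable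
  have hlim : Tendsto (fun n : ℕ => crossCov P (fun ω => ξ ω * (Iic (n : ℝ)).indicator M (ξ ω))
      fun ω => L (η ω)) atTop (𝓝 (crossCov P (fun ω => ξ ω * M (ξ ω)) fun ω => L (η ω))) := by
    refine tendsto_crossCov_of_abs_le (fun n => ?_) hLη hX
      (hX.mul_bdd hLη (.of_forall fun ω => hLB (η ω))) (fun n ω => ?_)
      fun ω => (tendsto_indicator_Iic_natCast M (ξ ω)).const_mul _
    · have := (hM.indicator_Iic n).measurable
      exact (by fun_prop : Measurable _).aestronglyMeasurable
    · rw [abs_mul, abs_mul, abs_of_nonneg ((hM.indicator_Iic n).nonneg _),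
        abs_of_nonneg (hM.nonneg _)]
      exact mul_le_mul_of_nonneg_left (hM.indicator_Iic_le n _) (abs_nonneg _)
  exact le_of_tendsto' hlim.abs fun n => h.abs_crossCov_tail_le_of_integrable hξ hξi hη hb hc hβ0
    hβ1 (hM.indicator_Iic n) (hM.integrable_indicator_Iic hMB n)
    (fun x hx => (hM.indicator_Iic_le n x).trans (hMc x hx)) hLm hLB hL

theorem integrable_and_abs_crossCov_tail_le (h : HasCovDecay P ξ η D) (hξ : Measurable ξ)
    (hξi : Integrable ξ P) (hη : Measurable η) {A : ℝ≥0∞} (hA : A ≠ ∞)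
    (hηA : P.map η ≤ A • volume) (hb : 1 ≤ b) (hc : 0 ≤ c) (hβ0 : 0 < β) (hβ1 : β < 1)
    (hM : IsDecreasingTail b M) (hMc : ∀ x > b, M x ≤ c * x ^ (β - 1)) {L : ℝ → ℝ}
    (hL : Integrable L) :
    Integrable (fun ω => ξ ω * M (ξ ω) * L (η ω)) P ∧
      |crossCov P (fun ω => ξ ω * M (ξ ω)) fun ω => L (η ω)| ≤
        2 * π * c * D * (∫ v, tailKernel β b v) * ∫ x, |L x| := by
  have hM' := hM.measurable
  have hD := h.nonneg
  have hk : 0 ≤ ∫ v, tailKernel β b v :=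
    integral_nonneg fun v => tailKernel_nonneg hβ0.le (by linarith) v
  refine integrable_mul_comp_and_abs_crossCov_comp_le (by fun_prop) (fun ω => ?_)
    (hM.integrable_mul_comp (hM.abs_le (by linarith) hc hβ1.le hMc) hξ hξi) hη (by positivity)
    (fun s hs hsv => ?_) ((hL.smul_measure hA).mono_measure hηA) hL
  · rcases le_or_gt (ξ ω) b with hx | hx
    · simp [hM.eq_zero _ hx]
    · exact mul_nonneg (by linarith) (hM.nonneg _)
  · have hs1 : ∀ x, |s.indicator (1 : ℝ → ℝ) x| = s.indicator 1 x := fun x =>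
      abs_of_nonneg (indicator_nonneg (fun _ _ => zero_le_one) x)
    have := h.abs_crossCov_tail_le_of_bounded hξ hξi hη hb hc hβ0 hβ1 hM hMc
      (L := s.indicator 1) (measurable_one.indicator hs) (B := 1)
      (fun x => (hs1 x).trans_le <| indicator_le_self' (fun _ _ => zero_le_one) x)
      ((integrable_indicator_iff hs).2 (integrableOn_const hsv.ne))
    simpa only [hs1, integral_indicator_one hs] using this

end HasCovDecay

lemma crossCov_sub {X X' Y : Ω → ℝ} (hX : Integrable X P) (hX' : Integrable X' P)
    (hXY : Integrable (fun ω => X ω * Y ω) P) (hXY' : Integrable (fun ω => X' ω * Y ω) P) :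
    crossCov P (fun ω => X ω - X' ω) Y = crossCov P X Y - crossCov P X' Y := by
  simp only [crossCov, sub_mul]
  rw [integral_sub hXY hXY', integral_sub hX hX']
  ring

lemma isDecreasingTail_indicator {H : ℝ → ℝ} {b β c : ℝ} (hβ : β < 1)
    (hanti : AntitoneOn H (Ioi b)) (hH : ∀ x > b, |H x| ≤ c * x ^ (β - 1)) :
    IsDecreasingTail b ((Ioi b).indicator H) where
  eq_zero x hx := indicator_of_notMem (not_lt.2 hx) H
  nonneg := indicator_nonneg fun x hx => by
    have hlim : Tendsto (fun y : ℝ => -(c * y ^ (β - 1))) atTop (𝓝 0) := by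
      simpa using ((tendsto_rpow_neg_atTop (by linarith : 0 < 1 - β)).const_mul c).neg
    refine le_of_tendsto hlim ?_
    filter_upwards [eventually_ge_atTop x] with y hxy
    exact (abs_le.1 (hH y (hx.trans_le hxy))).1.trans (hanti hx (hx.trans_le hxy) hxy)
  antitoneOn x hx y hy hxy := by
    rw [indicator_of_mem hx, indicator_of_mem hy]
    exact hanti hx hy hxy

lemma indicator_abs_gt_eq_sub_tails (K : ℝ → ℝ) {b : ℝ} (hb : 0 ≤ b) (x : ℝ) :
    (if b < |x| then K x else 0) = x * (Ioi b).indicator (fun y => K y / y) x -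
      -x * (Ioi b).indicator (fun y => K (-y) / -y) (-x) := by
  rcases lt_or_ge b x with hx | hx
  · have hx' : ¬b < -x := by linarith
    have hx0 : x ≠ 0 := by linarith
    simp [indicator, lt_abs, hx, hx', mul_div_cancel₀ _ hx0]
  · rcases lt_or_ge b (-x) with hx' | hx'
    · have hx0 : x ≠ 0 := by linarith
      simp [indicator, lt_abs, hx.not_gt, hx', mul_div_cancel₀ _ hx0]
    · simp [indicator, lt_abs, hx.not_gt, hx'.not_gt]

namespace HasCovDecay

variable [IsFiniteMeasure P] {ξ η : Ω → ℝ} {D b β c : ℝ} {A : ℝ≥0∞} {L : ℝ → ℝ}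

lemma integrable_and_abs_crossCov_indicator_Ioi_le (h : HasCovDecay P ξ η D) (hξ : Measurable ξ)
    (hξi : Integrable ξ P) (hη : Measurable η) (hA : A ≠ ∞) (hηA : P.map η ≤ A • volume)
    (hb : 1 ≤ b) (hc : 0 ≤ c) (hβ0 : 0 < β) (hβ1 : β < 1) {H : ℝ → ℝ}
    (hanti : AntitoneOn H (Ioi b)) (hH : ∀ x > b, |H x| ≤ c * x ^ (β - 1)) (hL : Integrable L) :
    Integrable (fun ω => ξ ω * (Ioi b).indicator H (ξ ω)) P ∧
      Integrable (fun ω => ξ ω * (Ioi b).indicator H (ξ ω) * L (η ω)) P ∧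
      |crossCov P (fun ω => ξ ω * (Ioi b).indicator H (ξ ω)) fun ω => L (η ω)| ≤
        2 * π * c * D * (∫ v, tailKernel β b v) * ∫ x, |L x| := by
  have hM := isDecreasingTail_indicator hβ1 hanti hH
  have hle : ∀ x > b, (Ioi b).indicator H x ≤ c * x ^ (β - 1) := fun x hx => by
    rw [indicator_of_mem (mem_Ioi.2 hx)]
    exact (le_abs_self _).trans (hH x hx)
  exact ⟨hM.integrable_mul_comp (hM.abs_le (by linarith) hc hβ1.le hle) hξ hξi,
    h.integrable_and_abs_crossCov_tail_le hξ hξi hη hA hηA hb hc hβ0 hβ1 hM hle hL⟩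

theorem abs_crossCov_indicator_abs_gt_le (h : HasCovDecay P ξ η D) (hξ : Measurable ξ)
    (hξi : Integrable ξ P) (hη : Measurable η) (hA : A ≠ ∞) (hηA : P.map η ≤ A • volume)
    (hb : 1 ≤ b) (hc : 0 ≤ c) (hβ0 : 0 < β) (hβ1 : β < 1) {K : ℝ → ℝ}
    (hK : ∀ x, b < |x| → |K x| ≤ c * |x| ^ β) (hanti : AntitoneOn (fun x => K x / x) (Ioi b))
    (hmono : MonotoneOn (fun x => K x / x) (Iio (-b))) (hL : Integrable L) :
    |crossCov P (fun ω => if b < |ξ ω| then K (ξ ω) else 0) fun ω => L (η ω)| ≤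
      4 * π * c * D * (∫ v, tailKernel β b v) * ∫ x, |L x| := by
  have hKx (x : ℝ) (hx : b < |x|) : |K x / x| ≤ c * |x| ^ (β - 1) := by
    have hx0 : 0 < |x| := by linarith
    rw [abs_div, div_le_iff₀ hx0, mul_assoc, ← Real.rpow_add_one hx0.ne', sub_add_cancel]
    exact hK x hx
  have habs {x : ℝ} (hx : b < x) : |x| = x := abs_of_pos (by linarith)
  have hright : ∀ x > b, |K x / x| ≤ c * x ^ (β - 1) := fun x hx => by
    simpa only [habs hx] using hKx x (by rwa [habs hx])
  have hleft : ∀ x > b, |K (-x) / -x| ≤ c * x ^ (β - 1) := fun x hx => by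
    simpa only [abs_neg, habs hx] using hKx (-x) (by rwa [abs_neg, habs hx])
  have hanti' : AntitoneOn (fun x => K (-x) / -x) (Ioi b) := fun x hx y hy hxy =>
    hmono (mem_Iio.2 (neg_lt_neg hy)) (mem_Iio.2 (neg_lt_neg hx)) (neg_le_neg hxy)
  obtain ⟨i₁, j₁, h₁⟩ := h.integrable_and_abs_crossCov_indicator_Ioi_le hξ hξi hη hA hηA hb hc hβ0
    hβ1 hanti hright hL
  obtain ⟨i₂, j₂, h₂⟩ := h.neg_left.integrable_and_abs_crossCov_indicator_Ioi_le hξ.neg hξi.neg hη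
    hA hηA hb hc hβ0 hβ1 hanti' hleft hL
  simp only [indicator_abs_gt_eq_sub_tails K (by linarith : 0 ≤ b)]
  simp only [Pi.neg_apply] at i₂ j₂ h₂
  rw [crossCov_sub i₁ i₂ j₁ j₂]
  exact (abs_sub _ _).trans ((add_le_add h₁ h₂).trans_eq (by ring))

end HasCovDecay

end TailCovariance

section ElementaryInequalities

lemma spow_neg (x p : ℝ) : spow (-x) p = -spow x p := by
  simp only [spow, Real.sign_neg, abs_neg, neg_mul]

lemma spow_of_nonneg {x p : ℝ} (hx : 0 ≤ x) (hp : p ≠ 0) : spow x p = x ^ p := by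
  rcases hx.eq_or_lt with rfl | hx
  · simp [spow, Real.zero_rpow hp]
  · rw [spow, Real.sign_of_pos hx, one_mul, abs_of_pos hx]

lemma abs_spow {p : ℝ} (hp : p ≠ 0) (x : ℝ) : |spow x p| = |x| ^ p := by
  wlog hx : 0 ≤ x generalizing x
  · simpa only [spow_neg, abs_neg] using this (-x) (by linarith)
  · rw [spow_of_nonneg hx hp, abs_of_nonneg hx, abs_of_nonneg (by positivity)]

lemma abs_rpow_sub_two_mul_self (x α : ℝ) : |x| ^ (α - 2) * x = spow x (α - 1) := by
  wlog hx : 0 ≤ x generalizing x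
  · simpa only [spow_neg, abs_neg, mul_neg, neg_inj] using this (-x) (by linarith)
  rcases hx.eq_or_lt with rfl | hx
  · simp [spow]
  · rw [show α - 1 = α - 2 + 1 by ring, spow, sign_of_pos hx, one_mul, abs_of_pos hx,
      rpow_add_one hx.ne']

@[fun_prop]
lemma measurable_spow (p : ℝ) : Measurable fun x => spow x p := by
  have h (x : ℝ) : spow x p = |x| ^ (p + 1 - 2) * x := by
    rw [abs_rpow_sub_two_mul_self, add_sub_cancel_right]
  simp only [h]
  fun_prop

lemma abs_spow_sub_spow_le {p : ℝ} (hp : 0 < p) (hp1 : p ≤ 1) (x y : ℝ) :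
    |spow x p - spow y p| ≤ 2 * |x - y| ^ p := by
  wlog hyx : |y| ≤ |x| generalizing x y
  · rw [abs_sub_comm, abs_sub_comm x]
    exact this y x (le_of_not_ge hyx)
  wlog hx : 0 ≤ x generalizing x y
  · have := this (-x) (-y) (by simpa only [abs_neg] using hyx) (by linarith)
    rwa [spow_neg, spow_neg, neg_sub_neg, neg_sub_neg, abs_sub_comm, abs_sub_comm y] at this
  rw [abs_of_nonneg hx] at hyx
  have hxy : 0 ≤ x - y := by linarith [le_abs_self y]
  have hnn : 0 ≤ (x - y) ^ p := by positivity
  rw [abs_of_nonneg hxy, spow_of_nonneg hx hp.ne']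
  rcases le_total 0 y with hy | hy
  · rw [abs_of_nonneg hy] at hyx
    have hsub : x ^ p ≤ (x - y) ^ p + y ^ p := by
      simpa only [sub_add_cancel] using rpow_add_le_add_rpow hxy hy hp.le hp1
    rw [spow_of_nonneg hy hp.ne', abs_of_nonneg (sub_nonneg.2 (rpow_le_rpow hy hyx hp.le))]
    linarith
  · have hx' : x ^ p ≤ (x - y) ^ p := rpow_le_rpow hx (by linarith) hp.le
    have hy' : (-y) ^ p ≤ (x - y) ^ p := rpow_le_rpow (by linarith) (by linarith) hp.le
    rw [← neg_neg y, spow_neg, spow_of_nonneg (neg_nonneg.2 hy) hp.ne', neg_neg, sub_neg_eq_add,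
      abs_of_nonneg (add_nonneg (by positivity) (rpow_nonneg (neg_nonneg.2 hy) p))]
    linarith

lemma abs_abs_add_rpow_sub_le {α : ℝ} (hα : 1 < α) {a b : ℝ} (hba : |b| ≤ |a|) :
    |(|a + b| ^ α - |a| ^ α)| ≤ α * (2 * |a|) ^ (α - 1) * |b| := by
  have hmv := (convex_Icc (-(2 * |a|)) (2 * |a|)).norm_image_sub_le_of_norm_hasDerivWithin_le
    (f := fun x : ℝ => |x| ^ α) (x := a) (y := a + b) (C := α * (2 * |a|) ^ (α - 1))
    (fun x _ => (hasDerivAt_abs_rpow x hα).hasDerivWithinAt) (fun x hx => ?_)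
    (abs_le.1 (by linarith [abs_nonneg a])) (abs_le.1 (by linarith [abs_add_le a b]))
  · simpa using hmv
  · rw [mul_assoc, abs_rpow_sub_two_mul_self, norm_mul, norm_of_nonneg (by linarith),
      norm_eq_abs, abs_spow (by linarith)]
    have : |x| ≤ 2 * |a| := abs_le.2 hx
    gcongr

lemma rpow_mul_rpow_le_mul_rpow_half {a b p q : ℝ} (hb : 0 < b) (hba : b ≤ a) (hpq : p ≤ q) :
    a ^ p * b ^ q ≤ (a * b) ^ ((p + q) / 2) := by
  have ha : 0 < a := hb.trans_le hba
  calc a ^ p * b ^ q = a ^ p * (b ^ ((q - p) / 2) * b ^ ((p + q) / 2)) := by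
        rw [← rpow_add hb]
        ring_nf
    _ ≤ a ^ p * (a ^ ((q - p) / 2) * b ^ ((p + q) / 2)) := by
        gcongr
    _ = (a * b) ^ ((p + q) / 2) := by
        rw [← mul_assoc, ← rpow_add ha, mul_rpow ha.le hb.le]
        ring_nf

lemma abs_abs_add_rpow_sub_sub_le {α : ℝ} (hα1 : 1 < α) (hα2 : α ≤ 2) (a b : ℝ) :
    |(|a + b| ^ α - |a| ^ α - |b| ^ α)| ≤ 5 * |a * b| ^ (α / 2) := by
  wlog hba : |b| ≤ |a| generalizing a b
  · have := this b a (le_of_not_ge hba)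
    rwa [add_comm b, mul_comm b, sub_right_comm] at this
  rcases eq_or_ne b 0 with rfl | hb
  · simp [Real.zero_rpow (by linarith : α ≠ 0), Real.zero_rpow (by linarith : α / 2 ≠ 0)]
  have hb0 : 0 < |b| := abs_pos.2 hb
  have hbα : |b| ^ α ≤ |a * b| ^ (α / 2) := by
    simpa [abs_mul] using rpow_mul_rpow_le_mul_rpow_half hb0 hba (by linarith : 0 ≤ α)
  have hab : |a| ^ (α - 1) * |b| ≤ |a * b| ^ (α / 2) := by
    simpa [abs_mul] using rpow_mul_rpow_le_mul_rpow_half hb0 hba (by linarith : α - 1 ≤ 1)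
  have htwo : α * (2 : ℝ) ^ (α - 1) ≤ 4 := by
    have : (2 : ℝ) ^ (α - 1) ≤ 2 := by
      simpa using rpow_le_rpow_of_exponent_le one_le_two (by linarith : α - 1 ≤ 1)
    nlinarith
  calc |(|a + b| ^ α - |a| ^ α - |b| ^ α)|
      ≤ |(|a + b| ^ α - |a| ^ α)| + |b| ^ α := by
        simpa only [abs_of_nonneg (rpow_nonneg (abs_nonneg b) α)] using
          abs_sub (|a + b| ^ α - |a| ^ α) (|b| ^ α)
    _ ≤ α * 2 ^ (α - 1) * (|a| ^ (α - 1) * |b|) + |b| ^ α := by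
        grw [abs_abs_add_rpow_sub_le hα1 hba, mul_rpow zero_le_two (abs_nonneg a)]
        exact le_of_eq (by ring)
    _ ≤ 4 * |a * b| ^ (α / 2) + |a * b| ^ (α / 2) := by gcongr
    _ = 5 * |a * b| ^ (α / 2) := by ring

lemma abs_exp_neg_sub_exp_neg_le {m x y : ℝ} (hx : m ≤ x) (hy : m ≤ y) :
    |exp (-x) - exp (-y)| ≤ |x - y| * exp (-m) := by
  have := (convex_Iic (-m)).norm_image_sub_le_of_norm_hasDerivWithin_le (f := exp) (f' := exp)
    (x := -y) (y := -x) (C := exp (-m)) (fun z _ => (Real.hasDerivAt_exp z).hasDerivWithinAt)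
    (fun z hz => by simpa using hz) (neg_le_neg hy) (neg_le_neg hx)
  rwa [neg_sub_neg, norm_eq_abs, norm_eq_abs, mul_comm, abs_sub_comm y] at this

lemma tendsto_rpow_mul_exp_neg_mul_rpow {c α : ℝ} (hc : 0 < c) (hα : 0 < α) (q : ℝ) :
    Tendsto (fun x : ℝ => x ^ q * exp (-(c * x ^ α))) atTop (𝓝 0) := by
  refine ((tendsto_rpow_mul_exp_neg_mul_atTop_nhds_zero (q / α) c hc).comp
    (tendsto_rpow_atTop hα)).congr' ?_
  filter_upwards [eventually_ge_atTop 0] with x hx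
  rw [Function.comp_apply, ← rpow_mul hx, mul_div_cancel₀ _ hα.ne', neg_mul]

lemma exists_abs_rpow_mul_exp_neg_le {c α q : ℝ} (hc : 0 < c) (hα : 0 < α) (hq : 0 ≤ q) :
    ∃ B > 0, ∀ x : ℝ, |x| ^ q * exp (-(c * |x| ^ α)) ≤ B * (1 + x ^ 2)⁻¹ := by
  set h : ℝ → ℝ := fun x => |x| ^ q * exp (-(c * |x| ^ α)) * (1 + x ^ 2)
  have hcont : Continuous h := by
    have := hα.le
    fun_prop (disch := simpa)
  have hlim : Tendsto h (cocompact ℝ) (𝓝 0) := by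
    have hsum := (tendsto_rpow_mul_exp_neg_mul_rpow hc hα q).add
      (tendsto_rpow_mul_exp_neg_mul_rpow hc hα (q + 2))
    rw [add_zero] at hsum
    refine (hsum.comp tendsto_norm_cocompact_atTop).congr fun x => ?_
    simp only [Function.comp_apply, norm_eq_abs, h]
    rw [rpow_add_of_nonneg (abs_nonneg x) hq zero_le_two, rpow_two, sq_abs]
    ring
  have h1 : 0 < h 1 := by positivity
  obtain ⟨z, hz⟩ := hcont.exists_forall_ge' 1 (hlim.eventually_le_const h1)
  refine ⟨h z, h1.trans_le (hz 1), fun x => ?_⟩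
  rw [← div_eq_mul_inv, le_div_iff₀ (by positivity)]
  exact hz x

end ElementaryInequalities

section Moments

variable {Ω : Type*} [MeasurableSpace Ω] {P : Measure Ω} [IsProbabilityMeasure P] {X : Ω → ℝ}
  {a c : ℝ}

lemma integrable_of_measureReal_abs_gt_le (hX : Measurable X) (ha : 1 < a)
    (h : ∀ r > 0, P.real {ω | r < |X ω|} ≤ c * r ^ (-a)) : Integrable X P := by
  refine ⟨hX.aestronglyMeasurable, ?_⟩
  rw [hasFiniteIntegral_iff_norm,
    lintegral_eq_lintegral_meas_lt P (.of_forall fun ω => norm_nonneg _) hX.norm.aemeasurable,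
    ← Ioc_union_Ioi_eq_Ioi zero_le_one, lintegral_union measurableSet_Ioi Ioc_disjoint_Ioi_same]
  refine ENNReal.add_lt_top.2 ⟨?_, ?_⟩
  · calc ∫⁻ t in Ioc (0 : ℝ) 1, P {ω | t < ‖X ω‖} ≤ ∫⁻ _ in Ioc (0 : ℝ) 1, 1 :=
          lintegral_mono fun _ => prob_le_one
      _ < ∞ := by simp
  · calc ∫⁻ t in Ioi (1 : ℝ), P {ω | t < ‖X ω‖}
        ≤ ∫⁻ t in Ioi (1 : ℝ), ENNReal.ofReal (c * t ^ (-a)) := by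
          refine setLIntegral_mono' measurableSet_Ioi fun t ht => ?_
          rw [← ofReal_measureReal]
          exact ENNReal.ofReal_le_ofReal (h t (one_pos.trans ht))
      _ < ∞ :=
          ((integrableOn_Ioi_rpow_of_lt (by linarith) one_pos).const_mul c).lintegral_lt_top

lemma measureReal_abs_gt_le_of_norm_one_sub_charFun_le {ν : Measure ℝ} [IsProbabilityMeasure ν]
    (ha : 0 ≤ a) (h : ∀ t, ‖1 - charFun ν t‖ ≤ c * |t| ^ a) {r : ℝ} (hr : 0 < r) :
    ν.real {x | r < |x|} ≤ 2 * c * 2 ^ a * r ^ (-a) := by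
  have hc : 0 ≤ c := by simpa using (norm_nonneg _).trans (h 1)
  have hr' : 0 < 2 * r⁻¹ := by positivity
  have hint : ‖∫ t in (-2 * r⁻¹)..(2 * r⁻¹), 1 - charFun ν t‖ ≤
      c * (2 * r⁻¹) ^ a * |2 * r⁻¹ - -2 * r⁻¹| := by
    refine intervalIntegral.norm_integral_le_of_norm_le_const fun t ht => (h t).trans ?_
    rw [uIoc_of_le (by linarith)] at ht
    have : |t| ≤ 2 * r⁻¹ := abs_le.2 ⟨by linarith [ht.1], ht.2⟩
    gcongr
  rw [abs_of_pos (by linarith)] at hint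
  calc ν.real {x | r < |x|}
      ≤ 2⁻¹ * r * ‖∫ t in (-2 * r⁻¹)..(2 * r⁻¹), 1 - charFun ν t‖ :=
        measureReal_abs_gt_le_integral_charFun hr
    _ ≤ 2⁻¹ * r * (c * (2 * r⁻¹) ^ a * (2 * r⁻¹ - -2 * r⁻¹)) := by gcongr
    _ = 2 * c * 2 ^ a * r ^ (-a) := by
        rw [mul_rpow zero_le_two (by positivity), inv_rpow hr.le, rpow_neg hr.le]
        field

theorem integrable_of_norm_one_sub_charFun_le (hX : Measurable X) (ha : 1 < a)
    (h : ∀ t, ‖1 - charFun (P.map X) t‖ ≤ c * |t| ^ a) : Integrable X P := by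
  have := Measure.isProbabilityMeasure_map (μ := P) hX.aemeasurable
  refine integrable_of_measureReal_abs_gt_le (c := 2 * c * 2 ^ a) hX ha fun r hr => ?_
  have htail := measureReal_abs_gt_le_of_norm_one_sub_charFun_le (by linarith) h hr
  rwa [measureReal_def, Measure.map_apply hX (measurableSet_lt measurable_const (by fun_prop)),
    ← measureReal_def] at htail

end Moments

section SpectralIntegrals

variable {α : ℝ} {S : Type*} [MeasurableSpace S] {μ : Measure S} {f g h : S → ℝ}

lemma memLalpha_iff_memLp (hα : 0 < α) : MemLalpha α μ f ↔ MemLp f (ENNReal.ofReal α) μ := by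
  refine ⟨fun hf => ?_, fun hf => ⟨hf.1, ?_⟩⟩
  · refine (integrable_norm_rpow_iff hf.1 (by simpa) ENNReal.ofReal_ne_top).1 ?_
    simpa [ENNReal.toReal_ofReal hα.le] using hf.2
  · simpa [ENNReal.toReal_ofReal hα.le] using
      hf.integrable_norm_rpow (by simpa) ENNReal.ofReal_ne_top

namespace MemLalpha

lemma abs (hf : MemLalpha α μ f) : MemLalpha α μ fun s => |f s| :=
  ⟨hf.1.norm, by simpa only [abs_abs] using hf.2⟩

lemma add (hα : 0 < α) (hf : MemLalpha α μ f) (hg : MemLalpha α μ g) :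
    MemLalpha α μ fun s => f s + g s := by
  rw [memLalpha_iff_memLp hα] at *
  exact hf.add hg

lemma const_mul (hf : MemLalpha α μ f) (c : ℝ) : MemLalpha α μ fun s => c * f s :=
  ⟨hf.1.const_mul c, by
    simpa only [abs_mul, mul_rpow (abs_nonneg _) (abs_nonneg _)] using hf.2.const_mul (|c| ^ α)⟩

lemma integrable_abs_add_abs_rpow (hα : 0 < α) (hf : MemLalpha α μ f) (hg : MemLalpha α μ g) :
    Integrable (fun s => (|f s| + |g s|) ^ α) μ :=
  (hf.abs.add hα hg.abs).2.congr (.of_forall fun s => by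
    simp only [abs_of_nonneg (add_nonneg (abs_nonneg (f s)) (abs_nonneg (g s)))])

lemma integrable_spow_mul (hα : 1 < α) (hf : MemLalpha α μ f) (hg : MemLalpha α μ g) :
    Integrable (fun s => spow (f s) (α - 1) * g s) μ := by
  refine (hf.integrable_abs_add_abs_rpow (by linarith) hg).mono'
    (((measurable_spow _).comp_aemeasurable hf.1.aemeasurable).aestronglyMeasurable.mul hg.1)
    (.of_forall fun s => ?_)
  have hf0 := abs_nonneg (f s)
  have hg0 := abs_nonneg (g s)
  calc ‖spow (f s) (α - 1) * g s‖ = |f s| ^ (α - 1) * |g s| := by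
        rw [norm_mul, norm_eq_abs, norm_eq_abs, abs_spow (by linarith)]
    _ ≤ (|f s| + |g s|) ^ (α - 1) * (|f s| + |g s|) ^ (1 : ℝ) := by
        rw [rpow_one]
        gcongr <;> linarith
    _ = (|f s| + |g s|) ^ α := by
        rw [← rpow_add_of_nonneg (by positivity) (by linarith) zero_le_one, sub_add_cancel]

lemma integrable_abs_rpow_mul_abs (hα : 1 < α) (hf : MemLalpha α μ f) (hg : MemLalpha α μ g) :
    Integrable (fun s => |f s| ^ (α - 1) * |g s|) μ :=
  (hf.integrable_spow_mul hα hg).norm.congr (.of_forall fun s => by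
    simp only [norm_mul, norm_eq_abs, abs_spow (sub_pos.2 hα).ne'])

lemma integrable_abs_mul_rpow_half (hα : 0 < α) (hf : MemLalpha α μ f) (hg : MemLalpha α μ g) :
    Integrable (fun s => |f s * g s| ^ (α / 2)) μ := by
  refine (hf.integrable_abs_add_abs_rpow hα hg).mono'
    ((hf.1.mul hg.1).aemeasurable.abs.pow_const _).aestronglyMeasurable (.of_forall fun s => ?_)
  have hf0 := abs_nonneg (f s)
  have hg0 := abs_nonneg (g s)
  calc ‖|f s * g s| ^ (α / 2)‖ = (|f s| * |g s|) ^ (α / 2) := by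
        rw [norm_of_nonneg (by positivity), abs_mul]
    _ ≤ ((|f s| + |g s|) ^ (2 : ℝ)) ^ (α / 2) := by
        gcongr
        rw [rpow_two]
        nlinarith
    _ = (|f s| + |g s|) ^ α := by
        rw [← rpow_mul (by positivity), mul_div_cancel₀ _ two_ne_zero]

end MemLalpha

lemma nrm_rpow (hα : α ≠ 0) (f : S → ℝ) : nrm α μ f ^ α = ∫ s, |f s| ^ α ∂μ := by
  rw [nrm, ← rpow_mul (integral_nonneg fun s => by positivity), one_div_mul_cancel hα, rpow_one]

lemma nrm_const_mul_rpow (hα : α ≠ 0) (c : ℝ) (f : S → ℝ) :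
    nrm α μ (fun s => c * f s) ^ α = |c| ^ α * nrm α μ f ^ α := by
  simp only [nrm_rpow hα, ← integral_const_mul, abs_mul, mul_rpow (abs_nonneg _) (abs_nonneg _)]

lemma dep1s_nonneg (f g : S → ℝ) : 0 ≤ dep1s α μ f g :=
  integral_nonneg fun s => by positivity

lemma dep2_nonneg (f g : S → ℝ) : 0 ≤ dep2 α μ f g :=
  integral_nonneg fun s => by positivity

lemma dep1s_const_mul_left (c : ℝ) (f g : S → ℝ) :
    dep1s α μ (fun s => c * f s) g = |c| ^ (α - 1) * dep1s α μ f g := by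
  simp only [dep1s, ← integral_const_mul, abs_mul, mul_rpow (abs_nonneg _) (abs_nonneg _),
    mul_assoc]

lemma dep1s_self (hα : 1 < α) (f : S → ℝ) : dep1s α μ f f = nrm α μ f ^ α := by
  rw [dep1s, nrm_rpow (by linarith)]
  congr! 2 with s
  conv_lhs => rw [← rpow_one |f s|, ← rpow_mul (abs_nonneg _), one_mul]
  rw [← rpow_add_of_nonneg (abs_nonneg _) (by linarith) zero_le_one, sub_add_cancel]

lemma dep2_const_mul (a b : ℝ) (f g : S → ℝ) :
    dep2 α μ (fun s => a * f s) (fun s => b * g s) =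
      |a| ^ (α / 2) * |b| ^ (α / 2) * dep2 α μ f g := by
  simp only [dep2, ← integral_const_mul, mul_mul_mul_comm a, abs_mul (a * b), abs_mul a b]
  congr! 2 with _
  rw [mul_rpow (by positivity) (abs_nonneg _), mul_rpow (abs_nonneg _) (abs_nonneg _)]

lemma abs_nrm_add_rpow_sub_sub_le (hα1 : 1 < α) (hα2 : α ≤ 2) (hf : MemLalpha α μ f)
    (hg : MemLalpha α μ g) :
    |nrm α μ (fun s => f s + g s) ^ α - (nrm α μ f ^ α + nrm α μ g ^ α)| ≤ 5 * dep2 α μ f g := by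
  have hα0 : 0 < α := by linarith
  have hfg := (hf.add hα0 hg).2
  have hsub : Integrable (fun s => |f s + g s| ^ α - |f s| ^ α) μ := hfg.sub hf.2
  rw [← sub_sub, nrm_rpow hα0.ne', nrm_rpow hα0.ne', nrm_rpow hα0.ne', ← integral_sub hfg hf.2,
    ← integral_sub hsub hg.2, dep2, ← integral_const_mul,
    ← norm_eq_abs]
  exact norm_integral_le_of_norm_le ((hf.integrable_abs_mul_rpow_half hα0 hg).const_mul 5)
    (.of_forall fun s => abs_abs_add_rpow_sub_sub_le hα1 hα2 (f s) (g s))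

/-- The covariation of the stable variable with spectral function `f` on the one with spectral
function `h`; up to the factor `α` it is the derivative of `‖h‖_α^α` in the direction `f`. -/
noncomputable def covariation (α : ℝ) (μ : Measure S) (f h : S → ℝ) : ℝ :=
  ∫ s, spow (h s) (α - 1) * f s ∂μ

lemma abs_covariation_le (hα : 1 < α) (hf : MemLalpha α μ f) (hh : MemLalpha α μ h) :
    |covariation α μ f h| ≤ dep1s α μ h f := by
  rw [covariation, dep1s, ← norm_eq_abs]
  refine norm_integral_le_of_norm_le (hh.integrable_abs_rpow_mul_abs hα hf)
    (.of_forall fun s => ?_)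
  rw [norm_mul, norm_eq_abs, norm_eq_abs, abs_spow (by linarith)]

lemma abs_covariation_add_sub_le (hα1 : 1 < α) (hα2 : α ≤ 2) (hf : MemLalpha α μ f)
    (hg : MemLalpha α μ g) (hh : MemLalpha α μ h) :
    |covariation α μ f (fun s => h s + g s) - covariation α μ f h| ≤ 2 * dep1s α μ g f := by
  rw [covariation, covariation,
    ← integral_sub ((hh.add (by linarith) hg).integrable_spow_mul hα1 hf)
      (hh.integrable_spow_mul hα1 hf), dep1s, ← integral_const_mul,
    ← norm_eq_abs]
  refine norm_integral_le_of_norm_le ((hg.integrable_abs_rpow_mul_abs hα1 hf).const_mul 2)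
    (.of_forall fun s => ?_)
  rw [← sub_mul, norm_mul, norm_eq_abs, norm_eq_abs, ← mul_assoc]
  gcongr
  simpa only [add_sub_cancel_left] using
    abs_spow_sub_spow_le (by linarith) (by linarith : α - 1 ≤ 1) (h s + g s) (h s)

lemma hasDerivAt_nrm_mul_add_rpow (hα : 1 < α) (hf : MemLalpha α μ f) (hh : MemLalpha α μ h)
    (u : ℝ) :
    HasDerivAt (fun t => nrm α μ (fun s => t * f s + h s) ^ α)
      (α * covariation α μ f fun s => u * f s + h s) u := by
  have hα0 : 0 < α := by linarith
  have hmem (t : ℝ) : MemLalpha α μ fun s => t * f s + h s := (hf.const_mul t).add hα0 hh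
  simp only [nrm_rpow hα0.ne', covariation, ← integral_const_mul]
  have hdom : MemLalpha α μ fun s => |(|u| + 1) * f s| + |h s| :=
    (hf.const_mul _).abs.add hα0 hh.abs
  refine (hasDerivAt_integral_of_dominated_loc_of_deriv_le (F := fun t s => |t * f s + h s| ^ α)
    (F' := fun t s => α * (spow (t * f s + h s) (α - 1) * f s)) (Metric.ball_mem_nhds u one_pos)
    (.of_forall fun t => (hmem t).2.1) (hmem u).2
    (((hmem u).integrable_spow_mul hα hf).const_mul α).1 (.of_forall fun s t ht => ?_)
    ((hdom.integrable_abs_rpow_mul_abs hα hf).const_mul α) (.of_forall fun s t _ => ?_)).2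
  · have htu : |t| ≤ |u| + 1 := by
      rw [Metric.mem_ball, Real.dist_eq] at ht
      linarith [abs_sub_abs_le_abs_sub t u]
    have hle : |t * f s + h s| ≤ |(|(|u| + 1) * f s| + |h s|)| := by
      grw [abs_add_le, abs_mul, htu, abs_mul, abs_of_nonneg (by positivity : 0 ≤ |u| + 1),
        ← le_abs_self]
    rw [norm_mul, norm_mul, norm_of_nonneg hα0.le, norm_eq_abs, norm_eq_abs,
      abs_spow (by linarith)]
    gcongr
  · refine ((hasDerivAt_abs_rpow (t * f s + h s) hα).comp t
      (((hasDerivAt_id t).mul_const (f s)).add_const (h s))).congr_deriv ?_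
    rw [mul_assoc α, abs_rpow_sub_two_mul_self, one_mul, mul_assoc]

lemma D1_eq (u v : ℝ) :
    D1 α μ f g u v =
      exp (-nrm α μ (fun s => u * f s + v * g s) ^ α) *
          -(α * covariation α μ f fun s => u * f s + v * g s) -
        exp (-nrm α μ (fun s => u * f s) ^ α - nrm α μ (fun s => v * g s) ^ α) *
          -(α * covariation α μ f fun s => u * f s) := by
  simp only [D1, covariation]
  ring

lemma hasDerivAt_Ufun (hα : 1 < α) (hf : MemLalpha α μ f) (hg : MemLalpha α μ g) (u v : ℝ) :
    HasDerivAt (fun u => Ufun α μ f g u v) (D1 α μ f g u v) u := by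
  have hzero : MemLalpha α μ fun _ => 0 := by simpa using hf.const_mul 0
  have h0 := hasDerivAt_nrm_mul_add_rpow hα hf hzero u
  simp only [add_zero] at h0
  rw [D1_eq]
  exact (hasDerivAt_nrm_mul_add_rpow hα hf (hg.const_mul v) u).fun_neg.exp.sub
    (h0.fun_neg.sub_const _).exp

lemma abs_D1_le_mul_exp (hα1 : 1 < α) (hα2 : α ≤ 2) (hf : MemLalpha α μ f)
    (hg : MemLalpha α μ g) {u v m : ℝ}
    (hm : m ≤ nrm α μ (fun s => u * f s + v * g s) ^ α)
    (hm' : m ≤ nrm α μ (fun s => u * f s) ^ α + nrm α μ (fun s => v * g s) ^ α) :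
    |D1 α μ f g u v| ≤ α * (2 * |v| ^ (α - 1) * dep1s α μ g f +
      5 * nrm α μ f ^ α * |u| ^ (α - 1) * |u| ^ (α / 2) * |v| ^ (α / 2) * dep2 α μ f g) *
        exp (-m) := by
  have huf := hf.const_mul u
  have hvg := hg.const_mul v
  set N := nrm α μ (fun s => u * f s + v * g s) ^ α
  set N' := nrm α μ (fun s => u * f s) ^ α + nrm α μ (fun s => v * g s) ^ α
  set c := covariation α μ f fun s => u * f s + v * g s
  set c' := covariation α μ f fun s => u * f s
  have hsplit : D1 α μ f g u v =
      -(α * ((c - c') * exp (-N) + c' * (exp (-N) - exp (-N')))) := by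
    rw [D1_eq, ← neg_add']
    ring
  have hcc' : |c - c'| ≤ 2 * (|v| ^ (α - 1) * dep1s α μ g f) := by
    simpa only [dep1s_const_mul_left] using abs_covariation_add_sub_le hα1 hα2 hf hvg huf
  have hc' : |c'| ≤ |u| ^ (α - 1) * nrm α μ f ^ α := by
    simpa only [dep1s_const_mul_left, dep1s_self hα1] using abs_covariation_le hα1 hf huf
  have hNN' : |N - N'| ≤ 5 * (|u| ^ (α / 2) * |v| ^ (α / 2) * dep2 α μ f g) := by
    simpa only [dep2_const_mul] using abs_nrm_add_rpow_sub_sub_le hα1 hα2 huf hvg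
  have hexp : exp (-N) ≤ exp (-m) := exp_le_exp.2 (neg_le_neg hm)
  have hdiff : |exp (-N) - exp (-N')| ≤ |N - N'| * exp (-m) :=
    abs_exp_neg_sub_exp_neg_le hm hm'
  calc |D1 α μ f g u v|
      ≤ α * (|c - c'| * exp (-N) + |c'| * |exp (-N) - exp (-N')|) := by
        rw [hsplit, abs_neg, abs_mul, abs_of_pos (by linarith : 0 < α)]
        grw [abs_add_le, abs_mul, abs_mul, abs_of_pos (exp_pos _)]
    _ ≤ α * (2 * (|v| ^ (α - 1) * dep1s α μ g f) * exp (-m) + |u| ^ (α - 1) * nrm α μ f ^ α *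
          (5 * (|u| ^ (α / 2) * |v| ^ (α / 2) * dep2 α μ f g) * exp (-m))) := by
        have := (abs_nonneg _).trans hcc'
        have := (abs_nonneg _).trans hc'
        gcongr
        exact hdiff.trans (by gcongr)
    _ = _ := by ring

end SpectralIntegrals

section CovarianceDecay

lemma exists_decay_majorant {α c M : ℝ} (hα : 1 ≤ α) (hc : 0 < c) (hM : 0 ≤ M) :
    ∃ C > 0, ∀ u v d₁ d₂ : ℝ, 0 ≤ d₁ → 0 ≤ d₂ →
      α * (2 * |v| ^ (α - 1) * d₁ +
        5 * M * |u| ^ (α - 1) * |u| ^ (α / 2) * |v| ^ (α / 2) * d₂) *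
          exp (-(c * |u| ^ α + c * |v| ^ α)) ≤
        C * (d₁ + d₂) * (1 + u ^ 2)⁻¹ * (1 + v ^ 2)⁻¹ := by
  have hα0 : 0 < α := by linarith
  obtain ⟨B₀, hB₀, h₀⟩ := exists_abs_rpow_mul_exp_neg_le hc hα0 le_rfl
  obtain ⟨B₁, hB₁, h₁⟩ := exists_abs_rpow_mul_exp_neg_le hc hα0 (sub_nonneg.2 hα)
  obtain ⟨B₂, hB₂, h₂⟩ := exists_abs_rpow_mul_exp_neg_le hc hα0
    (by linarith : 0 ≤ α - 1 + α / 2)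
  obtain ⟨B₃, hB₃, h₃⟩ := exists_abs_rpow_mul_exp_neg_le hc hα0 (half_pos hα0).le
  refine ⟨α * (2 * (B₀ * B₁) + 5 * M * (B₂ * B₃)), by positivity, fun u v d₁ d₂ hd₁ hd₂ => ?_⟩
  set e : ℝ → ℝ := fun x => exp (-(c * |x| ^ α))
  set w : ℝ → ℝ := fun x => (1 + x ^ 2)⁻¹
  have hw (x : ℝ) : 0 ≤ w x := by positivity
  calc _ = α * (2 * d₁ * ((|u| ^ (0 : ℝ) * e u) * (|v| ^ (α - 1) * e v)) +
          5 * M * d₂ * ((|u| ^ (α - 1 + α / 2) * e u) * (|v| ^ (α / 2) * e v))) := by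
        rw [rpow_zero, rpow_add_of_nonneg (abs_nonneg u) (by linarith) (by linarith), neg_add,
          exp_add]
        ring
    _ ≤ α * (2 * d₁ * ((B₀ * w u) * (B₁ * w v)) + 5 * M * d₂ * ((B₂ * w u) * (B₃ * w v))) := by
        have := hw u
        have := hw v
        gcongr α * (2 * d₁ * (?_ * ?_) + 5 * M * d₂ * (?_ * ?_))
        exacts [h₀ u, h₁ v, h₂ u, h₃ v]
    _ = α * (2 * (B₀ * B₁) * d₁ + 5 * M * (B₂ * B₃) * d₂) * w u * w v := by ring
    _ ≤ α * (2 * (B₀ * B₁) * (d₁ + d₂) + 5 * M * (B₂ * B₃) * (d₁ + d₂)) * w u * w v := by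
        gcongr <;> linarith [hw u, hw v]
    _ = _ := by ring

lemma exists_abs_D1_le {α ε nf ng : ℝ} (hα1 : 1 < α) (hα2 : α ≤ 2) (hε : 0 < ε) (hnf : 0 < nf)
    (hng : 0 < ng) :
    ∃ C > 0, ∀ (S : Type*) [MeasurableSpace S] (μ : Measure S) (f g : S → ℝ),
      MemLalpha α μ f → MemLalpha α μ g → nrm α μ f = nf → nrm α μ g = ng → A2 α ε μ f g →
      ∀ u v, |D1 α μ f g u v| ≤
        C * (dep1s α μ g f + dep2 α μ f g) * (1 + u ^ 2)⁻¹ * (1 + v ^ 2)⁻¹ := by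
  set c := min ε 1 * min (nf ^ α) (ng ^ α)
  have hc : 0 < c := by positivity
  obtain ⟨C, hC, hmaj⟩ := exists_decay_majorant (M := nf ^ α) hα1.le hc (by positivity)
  refine ⟨C, hC, fun S _ μ f g hf hg hfn hgn hA2 u v => ?_⟩
  have hcf {a : ℝ} (ha : min ε 1 ≤ a) : c ≤ a * nf ^ α :=
    mul_le_mul ha (min_le_left _ _) (by positivity) ((by positivity : 0 ≤ min ε 1).trans ha)
  have hcg {a : ℝ} (ha : min ε 1 ≤ a) : c ≤ a * ng ^ α :=
    mul_le_mul ha (min_le_right _ _) (by positivity) ((by positivity : 0 ≤ min ε 1).trans ha)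
  have hexponent {a : ℝ} (ha : min ε 1 ≤ a) :
      c * |u| ^ α + c * |v| ^ α ≤ a * (|u| ^ α * nf ^ α + |v| ^ α * ng ^ α) := by
    calc c * |u| ^ α + c * |v| ^ α ≤ a * nf ^ α * |u| ^ α + a * ng ^ α * |v| ^ α := by
          gcongr
          exacts [hcf ha, hcg ha]
      _ = a * (|u| ^ α * nf ^ α + |v| ^ α * ng ^ α) := by ring
  have hm : c * |u| ^ α + c * |v| ^ α ≤ nrm α μ (fun s => u * f s + v * g s) ^ α :=
    (hexponent (min_le_left _ _)).trans (by simpa only [hfn, hgn] using hA2 u v)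
  have hm' : c * |u| ^ α + c * |v| ^ α ≤
      nrm α μ (fun s => u * f s) ^ α + nrm α μ (fun s => v * g s) ^ α := by
    simpa only [one_mul, nrm_const_mul_rpow (by linarith : α ≠ 0), hfn, hgn] using
      hexponent (min_le_right _ _)
  exact (hfn ▸ abs_D1_le_mul_exp hα1 hα2 hf hg hm hm').trans
    (hmaj u v _ _ (dep1s_nonneg g f) (dep2_nonneg f g))

end CovarianceDecay

section JointlyStable

variable {Ω : Type*} [MeasurableSpace Ω] {P : Measure Ω} {ξ η : Ω → ℝ}

lemma hasDerivAt_weightedFourier {W : Ω → ℂ} (hW : Integrable W P) (hξ : Measurable ξ)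
    (hWξ : Integrable (fun ω => (ξ ω : ℂ) * W ω) P) (u : ℝ) :
    HasDerivAt (weightedFourier P W ξ)
      (2 * π * Complex.I * weightedFourier P (fun ω => ξ ω * W ω) ξ u) u := by
  have hmeas (v : ℝ) : AEStronglyMeasurable (fun ω => (𝐞 (v * ξ ω) : ℂ)) P :=
    (by fun_prop : Measurable _).aestronglyMeasurable
  simp only [weightedFourier, ← integral_const_mul]
  refine (hasDerivAt_integral_of_dominated_loc_of_deriv_le
    (F := fun v ω => W ω * 𝐞 (v * ξ ω))
    (F' := fun v ω => 2 * π * Complex.I * (ξ ω * W ω * 𝐞 (v * ξ ω)))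
    (bound := fun ω => 2 * π * ‖(ξ ω : ℂ) * W ω‖) univ_mem (.of_forall fun v => hW.1.mul (hmeas v))
    (integrable_mul_fourierChar_comp hW hξ u) ((hWξ.1.mul (hmeas u)).const_mul _)
    (.of_forall fun ω v _ => ?_) (hWξ.norm.const_mul _) (.of_forall fun ω v _ => ?_)).2
  · simp [Circle.norm_coe, abs_of_pos pi_pos]
  · refine (((Real.hasDerivAt_fourierChar (v * ξ ω)).scomp v
      ((hasDerivAt_id v).mul_const (ξ ω))).const_mul (W ω)).congr_deriv ?_
    simp only [one_mul, Complex.real_smul]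
    ring

lemma hasDerivAt_crossCov_fourierChar [IsFiniteMeasure P] {Y : Ω → ℂ} (hY : Integrable Y P)
    (hξ : Measurable ξ) (hξi : Integrable ξ P) (hξY : Integrable (fun ω => (ξ ω : ℂ) * Y ω) P)
    (u : ℝ) :
    HasDerivAt (fun t => crossCov P (fun ω => (𝐞 (t * ξ ω) : ℂ)) Y)
      (2 * π * Complex.I * crossCov P (fun ω => (ξ ω : ℂ) * 𝐞 (u * ξ ω)) Y) u := by
  have hcov (t : ℝ) : crossCov P (fun ω => (𝐞 (t * ξ ω) : ℂ)) Y =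
      weightedFourier P (fun ω => Y ω - ∫ ω', Y ω' ∂P) ξ t := by
    simpa only [one_mul] using (weightedFourier_mul_sub_integral (integrable_const (1 : ℂ))
      (by simpa only [one_mul] using hY) hξ t).symm
  rw [funext hcov, ← weightedFourier_mul_sub_integral (A := fun ω => (ξ ω : ℂ)) hξi.ofReal hξY hξ]
  refine hasDerivAt_weightedFourier (hY.sub (integrable_const _)) hξ ?_ u
  exact (hξY.sub (hξi.ofReal.mul_const _)).congr (.of_forall fun ω => (mul_sub ..).symm)

namespace JointSAS

variable {α : ℝ} {S : Type*} [MeasurableSpace S] {μ : Measure S} {f g : S → ℝ}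

lemma integral_fourierChar (h : JointSAS α μ f g P ξ η) (u v : ℝ) :
    ∫ ω, (𝐞 (u * ξ ω + v * η ω) : ℂ) ∂P =
      (exp (-nrm α μ (fun s => 2 * π * u * f s + 2 * π * v * g s) ^ α) : ℝ) := by
  rw [Complex.ofReal_exp, Complex.ofReal_neg, ← h]
  congr! 2 with ω
  rw [Real.fourierChar_apply]
  push_cast
  ring_nf

lemma integral_fourierChar_left (h : JointSAS α μ f g P ξ η) (u : ℝ) :
    ∫ ω, (𝐞 (u * ξ ω) : ℂ) ∂P = (exp (-nrm α μ (fun s => 2 * π * u * f s) ^ α) : ℝ) := by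
  simpa using h.integral_fourierChar u 0

lemma integral_fourierChar_right (h : JointSAS α μ f g P ξ η) (v : ℝ) :
    ∫ ω, (𝐞 (v * η ω) : ℂ) ∂P = (exp (-nrm α μ (fun s => 2 * π * v * g s) ^ α) : ℝ) := by
  simpa using h.integral_fourierChar 0 v

lemma crossCov_fourierChar (h : JointSAS α μ f g P ξ η) (u v : ℝ) :
    crossCov P (fun ω => (𝐞 (u * ξ ω) : ℂ)) (fun ω => (𝐞 (v * η ω) : ℂ)) =
      (Ufun α μ f g (2 * π * u) (2 * π * v) : ℝ) := by
  simp only [crossCov, ← Circle.coe_mul, ← AddChar.map_add_eq_mul, h.integral_fourierChar,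
    h.integral_fourierChar_left, h.integral_fourierChar_right, Ufun, sub_eq_add_neg, exp_add,
    Complex.ofReal_add, Complex.ofReal_neg, Complex.ofReal_mul]

lemma integrable_left [IsProbabilityMeasure P] (h : JointSAS α μ f g P ξ η) (hα : 1 < α)
    (hξ : Measurable ξ) : Integrable ξ P := by
  refine integrable_of_norm_one_sub_charFun_le (c := nrm α μ f ^ α) hξ hα fun t => ?_
  have hchar : charFun (P.map ξ) t = (exp (-(|t| ^ α * nrm α μ f ^ α)) : ℝ) := by
    rw [charFun_apply_real, integral_map hξ.aemeasurable (by fun_prop),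
      ← nrm_const_mul_rpow (by linarith), Complex.ofReal_exp, Complex.ofReal_neg]
    simpa [mul_comm Complex.I] using h t 0
  have hexp := one_sub_le_exp_neg (|t| ^ α * nrm α μ f ^ α)
  have hnn : 0 ≤ |t| ^ α * nrm α μ f ^ α := by
    rw [nrm_rpow (by linarith)]
    exact mul_nonneg (by positivity) (integral_nonneg fun s => by positivity)
  rw [hchar, ← Complex.ofReal_one, ← Complex.ofReal_sub, Complex.norm_real, norm_eq_abs,
    abs_of_nonneg (sub_nonneg.2 (exp_le_one_iff.2 (neg_nonpos.2 hnn)))]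
  linarith

lemma norm_crossCov_mul_fourierChar [IsProbabilityMeasure P] (h : JointSAS α μ f g P ξ η)
    (hα : 1 < α) (hf : MemLalpha α μ f) (hg : MemLalpha α μ g) (hξ : Measurable ξ)
    (hη : Measurable η) (u v : ℝ) :
    ‖crossCov P (fun ω => (ξ ω : ℂ) * 𝐞 (u * ξ ω)) fun ω => (𝐞 (v * η ω) : ℂ)‖ =
      |D1 α μ f g (2 * π * u) (2 * π * v)| := by
  have hξi := h.integrable_left hα hξ
  have hY : Integrable (fun ω => (𝐞 (v * η ω) : ℂ)) P := by
    simpa only [one_mul] using integrable_mul_fourierChar_comp (integrable_const (1 : ℂ)) hη v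
  have hderiv := hasDerivAt_crossCov_fourierChar hY hξ hξi
    (integrable_mul_fourierChar_comp hξi.ofReal hη v) u
  have hderiv' : HasDerivAt (fun t => (Ufun α μ f g (2 * π * t) (2 * π * v) : ℂ))
      ((D1 α μ f g (2 * π * u) (2 * π * v) * (2 * π) : ℝ) : ℂ) u := by
    simpa using ((hasDerivAt_Ufun hα hf hg (2 * π * u) (2 * π * v)).comp u
      ((hasDerivAt_id u).const_mul (2 * π))).ofReal_comp
  simp only [h.crossCov_fourierChar] at hderiv
  have hnorm := congrArg norm (hderiv.unique hderiv')
  rw [norm_mul _ (crossCov ..), Complex.norm_real, norm_mul (D1 ..),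
    norm_of_nonneg two_pi_pos.le, mul_comm] at hnorm
  refine mul_right_cancel₀ two_pi_pos.ne' (Eq.trans ?_ hnorm)
  simp [abs_of_pos pi_pos]

lemma exists_map_le_smul_volume [IsProbabilityMeasure P] (h : JointSAS α μ f g P ξ η) (hα : 0 < α)
    (hg : 0 < nrm α μ g) (hη : Measurable η) : ∃ A ≠ ∞, P.map η ≤ A • volume := by
  obtain ⟨B, -, hB⟩ := exists_abs_rpow_mul_exp_neg_le (c := (2 * π) ^ α * nrm α μ g ^ α) (q := 0)
    (by positivity) hα le_rfl
  refine ⟨_, ENNReal.ofReal_ne_top, map_le_ofReal_integral_norm_weightedFourier_smul_volume hη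
    (integrable_weightedFourier_of_norm_le (integrable_const 1) hη (d := B) fun v => ?_)⟩
  have hchar : weightedFourier P (fun _ => 1) η v =
      (exp (-nrm α μ (fun s => 2 * π * v * g s) ^ α) : ℝ) := by
    rw [← h.integral_fourierChar_right]
    simp only [weightedFourier, one_mul]
    rfl
  rw [hchar, Complex.norm_real, norm_of_nonneg (exp_pos _).le, nrm_const_mul_rpow hα.ne', abs_mul,
    abs_of_pos two_pi_pos, mul_rpow two_pi_pos.le (abs_nonneg v), mul_right_comm]
  simpa using hB v

end JointSAS

end JointlyStable

theorem exists_hasCovDecay {α ε nf ng : ℝ} (hα1 : 1 < α) (hα2 : α ≤ 2) (hε : 0 < ε)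
    (hnf : 0 < nf) (hng : 0 < ng) :
    ∃ C > 0, ∀ (S : Type*) [MeasurableSpace S] (μ : Measure S) (f g : S → ℝ),
      MemLalpha α μ f → MemLalpha α μ g → nrm α μ f = nf → nrm α μ g = ng → A2 α ε μ f g →
      ∀ (Ω : Type*) [MeasurableSpace Ω] (P : Measure Ω) [IsProbabilityMeasure P] (ξ η : Ω → ℝ),
        Measurable ξ → Measurable η → JointSAS α μ f g P ξ η →
        HasCovDecay P ξ η (C * (dep1s α μ g f + dep2 α μ f g)) := by
  obtain ⟨C, hC, hD1⟩ := exists_abs_D1_le hα1 hα2 hε hnf hng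
  refine ⟨C, hC, fun S _ μ f g hf hg hfn hgn hA2 Ω _ P _ ξ η hξ hη h u v => ?_⟩
  have hdil (x : ℝ) : (1 + (2 * π * x) ^ 2)⁻¹ ≤ (1 + x ^ 2)⁻¹ := by
    rw [mul_pow]
    gcongr
    exact le_mul_of_one_le_left (sq_nonneg x) (one_le_pow₀ (by linarith [pi_gt_three]))
  have hdep : 0 ≤ dep1s α μ g f + dep2 α μ f g := add_nonneg (dep1s_nonneg g f) (dep2_nonneg f g)
  rw [h.norm_crossCov_mul_fourierChar hα1 hf hg hξ hη]
  grw [hD1 S μ f g hf hg hfn hgn hA2, hdil u, hdil v]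

theorem stmt4_general (α β ε₂ nf ng cK : ℝ) (hα1 : 1 < α) (hα2 : α ≤ 2)
    (hβ0 : 0 < β) (hβ1 : β < 1) (hε₂ : 0 < ε₂) (hnf : 0 < nf) (hng : 0 < ng) :
    ∃ C > (0 : ℝ), ∀ (S : Type*) [MeasurableSpace S] (μ : Measure S)
      (f g : S → ℝ), MemLalpha α μ f → MemLalpha α μ g →
      nrm α μ f = nf → nrm α μ g = ng → A2 α ε₂ μ f g →
      ∀ (Ω : Type*) [MeasurableSpace Ω] (P : Measure Ω) [IsProbabilityMeasure P]
        (ξ η : Ω → ℝ), Measurable ξ → Measurable η → JointSAS α μ f g P ξ η →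
        ∀ b : ℝ, 1 ≤ b →
        ∀ K L : ℝ → ℝ,
          (∀ x : ℝ, b < |x| → |K x| ≤ cK * |x| ^ β) →
          AntitoneOn (fun x => K x / x) (Set.Ioi b) →
          MonotoneOn (fun x => K x / x) (Set.Iio (-b)) →
          Integrable L volume →
          |crossCov P (fun ω => if b < |ξ ω| then K (ξ ω) else 0) (fun ω => L (η ω))|
            ≤ C * b ^ (β - 1) * log (b + 1) * (∫ x, |L x|) *
                (dep1s α μ g f + dep2 α μ f g) := by
  obtain ⟨C, hC, hdecay⟩ := exists_hasCovDecay hα1 hα2 hε₂ hnf hng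
  set c := |cK| + 1
  set κ := ((β * (1 - β))⁻¹ + 1) / log 2 + 1
  have : 0 < κ := by
    have := sub_pos.2 hβ1
    have := log_pos one_lt_two
    positivity
  refine ⟨4 * π * c * C * κ, by positivity, ?_⟩
  intro S _ μ f g hf hg hfn hgn hA2 Ω _ P _ ξ η hξ hη hJ b hb K L hK hanti hmono hL
  obtain ⟨A, hA, hηA⟩ := hJ.exists_map_le_smul_volume (by linarith) (hgn ▸ hng) hη
  have hcov := hdecay S μ f g hf hg hfn hgn hA2 Ω P ξ η hξ hη hJ
  have hKc (x : ℝ) (hx : b < |x|) : |K x| ≤ c * |x| ^ β :=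
    (hK x hx).trans (by gcongr; linarith [le_abs_self cK])
  have hD := hcov.nonneg
  have : 0 ≤ ∫ x, |L x| := integral_nonneg fun x => abs_nonneg _
  calc _ ≤ 4 * π * c * (C * (dep1s α μ g f + dep2 α μ f g)) * (∫ v, tailKernel β b v) *
          ∫ x, |L x| :=
        hcov.abs_crossCov_indicator_abs_gt_le hξ (hJ.integrable_left hα1 hξ) hη hA hηA hb
          (by positivity) hβ0 hβ1 hKc hanti hmono hL
    _ ≤ 4 * π * c * (C * (dep1s α μ g f + dep2 α μ f g)) *
          (κ * (b ^ (β - 1) * log (b + 1))) * ∫ x, |L x| := by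
        gcongr
        exact integral_tailKernel_le hβ0 hβ1 hb
    _ = _ := by ring

/-- Paper's Theorem 2.3. -/
theorem stmt4 (α β ε₁ ε₂ nf ng cK : ℝ) (hα1 : 1 < α) (hα2 : α < 2)
    (hβ0 : 0 < β) (hβ : β < α / 2) (hε₁ : 0 < ε₁) (hε₂ : 0 < ε₂)
    (hnf : 0 < nf) (hng : 0 < ng) :
    ∃ C > (0:ℝ), ∀ (S : Type) [MeasurableSpace S] (μ : Measure S) [SigmaFinite μ]
      (f g : S → ℝ), MemLalpha α μ f → MemLalpha α μ g →
      nrm α μ f = nf → nrm α μ g = ng → A1 α ε₁ μ f g → A2 α ε₂ μ f g →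
      ∀ (Ω : Type) [MeasurableSpace Ω] (P : Measure Ω) [IsProbabilityMeasure P]
        (ξ η : Ω → ℝ), Measurable ξ → Measurable η → JointSAS α μ f g P ξ η →
        ∀ b : ℝ, 1 ≤ b →
        ∀ K L : ℝ → ℝ,
          (∀ x : ℝ, b < |x| → |K x| ≤ cK * |x| ^ β) →
          AntitoneOn (fun x => K x / x) (Set.Ioi b) →
          MonotoneOn (fun x => K x / x) (Set.Iio (-b)) →
          Integrable L volume →
          |(∫ ω, (if b < |ξ ω| then K (ξ ω) else 0) * L (η ω) ∂P) -
              (∫ ω, (if b < |ξ ω| then K (ξ ω) else 0) ∂P) * (∫ ω, L (η ω) ∂P)|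
            ≤ C * b ^ (β - 1) * Real.log (b + 1) * (∫ x, |L x|) *
                (dep1s α μ g f + dep2 α μ f g) := by
  obtain ⟨C, hC, h⟩ := stmt4_general α β ε₂ nf ng cK hα1 hα2.le hβ0 (by linarith) hε₂ hnf hng
  exact ⟨C, hC, fun S _ μ _ f g hf hg hfn hgn _ => h S μ f g hf hg hfn hgn⟩
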